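/- arXiv:2001.00849 — 2 statements merged into one kernel-verified Lean document; each statement's English description precedes it below -/
import Mathlib

section
/- The order chromatic numbers satisfy χ'_<(P_5^{1423}) = ∞ and χ'_<(P_5^{2314}) = ∞, but χ'_<({P_5^{1423}, P_5^{2314}}) = 3; that is, each of the two edge-ordered paths individually can be avoided by every finite simple graph, yet there is a finite simple graph of chromatic number 3 that cannot avoid the pair, and every bipartite graph can avoid the pair. -/
/-- An edge-ordered graph: a finite simple graph on vertex set `Fin nv`
together with a labeling of (potential) edges.  The edge-order is the order of
the labels; the labeling is required to be injective on the edge set via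
`EOGraph.Valid`. -/
structure EOGraph where
  nv : ℕ
  graph : SimpleGraph (Fin nv)
  label : Sym2 (Fin nv) → ℕ

namespace EOGraph

/-- The labeling is injective on the edge set, hence defines a linear order on the edges. -/
def Valid (G : EOGraph) : Prop :=
  ∀ e ∈ G.graph.edgeSet, ∀ f ∈ G.graph.edgeSet, G.label e = G.label f → e = f

/-- The number of edges of an edge-ordered graph. -/
noncomputable def edges (G : EOGraph) : ℕ := G.graph.edgeSet.ncard

/-- `G.Contains H`: some subgraph of `G`, with the edge-order induced from `G`,
is isomorphic to `H` (via a graph isomorphism preserving the relative order of edges). -/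
def Contains (G H : EOGraph) : Prop :=
  ∃ f : Fin H.nv ↪ Fin G.nv,
    (∀ a b, H.graph.Adj a b → G.graph.Adj (f a) (f b)) ∧
    ∀ a b c d, H.graph.Adj a b → H.graph.Adj c d →
      (H.label s(a, b) < H.label s(c, d) ↔ G.label s(f a, f b) < G.label s(f c, f d))

/-- `G` avoids `H` if no subgraph of `G` (with the induced edge-order) is isomorphic to `H`. -/
def Avoids (G H : EOGraph) : Prop := ¬ G.Contains H

/-- `G` avoids a family if it avoids every member. -/
def AvoidsFam (G : EOGraph) (F : Set EOGraph) : Prop := ∀ H ∈ F, G.Avoids H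

/-- Isomorphism of edge-ordered graphs. -/
def Iso (G H : EOGraph) : Prop :=
  ∃ f : Fin G.nv ≃ Fin H.nv,
    (∀ a b, G.graph.Adj a b ↔ H.graph.Adj (f a) (f b)) ∧
    ∀ a b c d, G.graph.Adj a b → G.graph.Adj c d →
      (G.label s(a, b) < G.label s(c, d) ↔ H.label s(f a, f b) < H.label s(f c, f d))

end EOGraph

/-- A simple graph `G` can avoid the family `F` if some linear order on its edges
(given by a labeling injective on the edge set) makes it into an edge-ordered graph
avoiding `F`. -/
def CanAvoid {n : ℕ} (G : SimpleGraph (Fin n)) (F : Set EOGraph) : Prop :=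
  ∃ L : Sym2 (Fin n) → ℕ, (EOGraph.mk n G L).Valid ∧ (EOGraph.mk n G L).AvoidsFam F

/-- The order chromatic number of a family of edge-ordered graphs: the least chromatic
number of a finite simple graph that cannot avoid the family (`⊤` if every finite
simple graph can avoid it). -/
noncomputable def orderChrom (F : Set EOGraph) : ℕ∞ :=
  ⨅ (n : ℕ) (G : SimpleGraph (Fin n)) (_ : ¬ CanAvoid G F), G.chromaticNumber

/-- The Turán number `lex(n, F)`: the maximum number of edges of an edge-ordered graph
on `n` vertices avoiding the family `F`. -/
noncomputable def lexFam (n : ℕ) (F : Set EOGraph) : ℕ :=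
  sSup {m : ℕ | ∃ G : EOGraph, G.nv = n ∧ G.Valid ∧ G.AvoidsFam F ∧ G.edges = m}

/-- Build a symmetric labeling from a function of the (min, max) of the two endpoints. -/
def symLabel {N : ℕ} (f : Fin N → Fin N → ℕ) : Sym2 (Fin N) → ℕ :=
  Sym2.lift ⟨fun a b => f (min a b) (max a b), fun a b => by
    show f (min a b) (max a b) = f (min b a) (max b a)
    rw [min_comm, max_comm]⟩

/-- The edge-ordered path on `k` vertices `0, 1, …, k-1`, where the edge `{i, i+1}`
gets label `l[i]`. -/
def pathEO (k : ℕ) (l : List ℕ) : EOGraph where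
  nv := k
  graph := SimpleGraph.fromRel (fun a b => (a : ℕ) + 1 = (b : ℕ))
  label := symLabel fun a _ => l.getD (a : ℕ) 0

/-- The edge-ordered path `P_5^{1423}` on vertices `a,b,c,d,e`:
edge-order `ab < cd < de < bc`. -/
def P5_1423 : EOGraph := pathEO 5 [1, 4, 2, 3]

/-- The edge-ordered path `P_5^{2314}` on vertices `a,b,c,d,e`:
edge-order `cd < ab < bc < de`. -/
def P5_2314 : EOGraph := pathEO 5 [2, 3, 1, 4]

namespace OrderChromProof

open EOGraph

/-! ### Containment of the two patterns, spelled out -/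

theorem contains_1423 {n : ℕ} {G : SimpleGraph (Fin n)} {L : Sym2 (Fin n) → ℕ}
    (h : (EOGraph.mk n G L).Contains P5_1423) :
    ∃ a b c d e : Fin n, [a, b, c, d, e].Nodup ∧ G.Adj a b ∧ G.Adj b c ∧ G.Adj c d ∧ G.Adj d e ∧
      L s(a, b) < L s(c, d) ∧ L s(c, d) < L s(d, e) ∧ L s(d, e) < L s(b, c) := by
  obtain ⟨f, hadj, hord⟩ := h
  change Fin 5 ↪ Fin n at f
  have key : ∀ i j : Fin 5, i ≠ j → f i ≠ f j := fun i j hij hf => hij (f.injective hf)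
  have a01 : P5_1423.graph.Adj (0 : Fin 5) (1 : Fin 5) := by simp [P5_1423, pathEO]
  have a12 : P5_1423.graph.Adj (1 : Fin 5) (2 : Fin 5) := by simp [P5_1423, pathEO]
  have a23 : P5_1423.graph.Adj (2 : Fin 5) (3 : Fin 5) := by simp [P5_1423, pathEO]
  have a34 : P5_1423.graph.Adj (3 : Fin 5) (4 : Fin 5) := by simp [P5_1423, pathEO]
  refine ⟨f 0, f 1, f 2, f 3, f 4, ?_, hadj _ _ a01, hadj _ _ a12, hadj _ _ a23, hadj _ _ a34,
    (hord _ _ _ _ a01 a23).1 ?_, (hord _ _ _ _ a23 a34).1 ?_, (hord _ _ _ _ a34 a12).1 ?_⟩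
  · simp [key]
  all_goals decide

theorem contains_2314 {n : ℕ} {G : SimpleGraph (Fin n)} {L : Sym2 (Fin n) → ℕ}
    (h : (EOGraph.mk n G L).Contains P5_2314) :
    ∃ a b c d e : Fin n, [a, b, c, d, e].Nodup ∧ G.Adj a b ∧ G.Adj b c ∧ G.Adj c d ∧ G.Adj d e ∧
      L s(c, d) < L s(a, b) ∧ L s(a, b) < L s(b, c) ∧ L s(b, c) < L s(d, e) := by
  obtain ⟨f, hadj, hord⟩ := h
  change Fin 5 ↪ Fin n at f
  have key : ∀ i j : Fin 5, i ≠ j → f i ≠ f j := fun i j hij hf => hij (f.injective hf)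
  have a01 : P5_2314.graph.Adj (0 : Fin 5) (1 : Fin 5) := by simp [P5_2314, pathEO]
  have a12 : P5_2314.graph.Adj (1 : Fin 5) (2 : Fin 5) := by simp [P5_2314, pathEO]
  have a23 : P5_2314.graph.Adj (2 : Fin 5) (3 : Fin 5) := by simp [P5_2314, pathEO]
  have a34 : P5_2314.graph.Adj (3 : Fin 5) (4 : Fin 5) := by simp [P5_2314, pathEO]
  refine ⟨f 0, f 1, f 2, f 3, f 4, ?_, hadj _ _ a01, hadj _ _ a12, hadj _ _ a23, hadj _ _ a34,
    (hord _ _ _ _ a23 a01).1 ?_, (hord _ _ _ _ a01 a12).1 ?_, (hord _ _ _ _ a12 a34).1 ?_⟩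
  · simp [key]
  all_goals decide

theorem path_adj (l : List ℕ) (a b : Fin 5) (h : (pathEO 5 l).graph.Adj a b) :
    ∃ i : Fin 4, s(a, b) = s(i.castSucc, i.succ) := by
  have h' : a ≠ b ∧ ((a : ℕ) + 1 = b ∨ (b : ℕ) + 1 = a) := by
    simpa [pathEO, SimpleGraph.fromRel_adj] using h
  clear h
  revert a b
  decide

/-- Recognising an edge-ordered path on five vertices inside a labelled graph. -/
theorem contains_path {n : ℕ} {G : SimpleGraph (Fin n)} {L : Sym2 (Fin n) → ℕ} (l : List ℕ)
    (v : Fin 5 → Fin n) (hv : Function.Injective v)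
    (hadj : ∀ i : Fin 4, G.Adj (v i.castSucc) (v i.succ))
    (hord : ∀ i j : Fin 4, l.getD i 0 < l.getD j 0 ↔
      L s(v i.castSucc, v i.succ) < L s(v j.castSucc, v j.succ)) :
    (EOGraph.mk n G L).Contains (pathEO 5 l) := by
  have lab : ∀ i : Fin 4, (pathEO 5 l).label s(i.castSucc, i.succ) = l.getD i 0 := by
    intro i
    fin_cases i <;> rfl
  have lab2 : ∀ (a b : Fin 5) (i : Fin 4), s(a, b) = s(i.castSucc, i.succ) →
      s(v a, v b) = s(v i.castSucc, v i.succ) := by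
    intro a b i h
    simpa using congrArg (Sym2.map v) h
  refine ⟨⟨v, hv⟩, ?_, ?_⟩
  · intro a b hab
    obtain ⟨i, hi⟩ := path_adj l a b hab
    have := lab2 a b i hi
    have h1 := hadj i
    change G.Adj (v a) (v b)
    rw [← SimpleGraph.mem_edgeSet] at h1 ⊢
    rwa [this]
  · intro a b c d hab hcd
    obtain ⟨i, hi⟩ := path_adj l a b hab
    obtain ⟨j, hj⟩ := path_adj l c d hcd
    change (pathEO 5 l).label s(a, b) < (pathEO 5 l).label s(c, d) ↔
      L s(v a, v b) < L s(v c, v d)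
    have e1 : (pathEO 5 l).label s(a, b) = l.getD i 0 :=
      (congrArg (pathEO 5 l).label hi).trans (lab i)
    have e2 : (pathEO 5 l).label s(c, d) = l.getD j 0 :=
      (congrArg (pathEO 5 l).label hj).trans (lab j)
    rw [lab2 a b i hi, lab2 c d j hj, ← hord i j, e1, e2]

theorem vec_inj {n : ℕ} {a b c d e : Fin n} (h : [a, b, c, d, e].Nodup) :
    Function.Injective ![a, b, c, d, e] := by
  have : List.ofFn ![a, b, c, d, e] = [a, b, c, d, e] := by simp
  rw [← List.nodup_ofFn, this]
  exact h

theorem contains_1423_of {n : ℕ} {G : SimpleGraph (Fin n)} {L : Sym2 (Fin n) → ℕ}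
    {a b c d e : Fin n} (hn : [a, b, c, d, e].Nodup) (h1 : G.Adj a b) (h2 : G.Adj b c)
    (h3 : G.Adj c d) (h4 : G.Adj d e)
    (o1 : L s(a, b) < L s(c, d)) (o2 : L s(c, d) < L s(d, e)) (o3 : L s(d, e) < L s(b, c)) :
    (EOGraph.mk n G L).Contains P5_1423 := by
  refine contains_path [1, 4, 2, 3] ![a, b, c, d, e] (vec_inj hn) ?_ ?_
  · intro i
    fin_cases i <;> assumption
  · intro i j
    fin_cases i <;> fin_cases j <;> simp <;> omega

theorem contains_2314_of {n : ℕ} {G : SimpleGraph (Fin n)} {L : Sym2 (Fin n) → ℕ}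
    {a b c d e : Fin n} (hn : [a, b, c, d, e].Nodup) (h1 : G.Adj a b) (h2 : G.Adj b c)
    (h3 : G.Adj c d) (h4 : G.Adj d e)
    (o1 : L s(c, d) < L s(a, b)) (o2 : L s(a, b) < L s(b, c)) (o3 : L s(b, c) < L s(d, e)) :
    (EOGraph.mk n G L).Contains P5_2314 := by
  refine contains_path [2, 3, 1, 4] ![a, b, c, d, e] (vec_inj hn) ?_ ?_
  · intro i
    fin_cases i <;> assumption
  · intro i j
    fin_cases i <;> fin_cases j <;> simp <;> omega

/-! ### Orders avoiding the patterns -/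

theorem key_le {n x y x' y' : ℕ} (hy' : y' < n) (h : n * x + y < n * x' + y') :
    x ≤ x' := by
  by_contra hc
  have : n * (x' + 1) ≤ n * x := Nat.mul_le_mul_left n (by omega)
  rw [Nat.mul_add] at this
  omega

theorem key_eq {n x y x' y' : ℕ} (hy : y < n) (hy' : y' < n) (h : n * x + y = n * x' + y') :
    x = x' ∧ y = y' := by
  have hx : x = x' := by
    rcases lt_trichotomy x x' with hlt | heq | hlt
    · have : n * (x + 1) ≤ n * x' := Nat.mul_le_mul_left n (by omega)
      rw [Nat.mul_add] at this
      omega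
    · exact heq
    · have : n * (x' + 1) ≤ n * x := Nat.mul_le_mul_left n (by omega)
      rw [Nat.mul_add] at this
      omega
  subst hx
  exact ⟨rfl, by omega⟩

theorem symLabel_mk {n : ℕ} (f : Fin n → Fin n → ℕ) (a b : Fin n) :
    symLabel f s(a, b) = f (min a b) (max a b) := rfl

theorem sym2_eq_of_minmax {n : ℕ} {a b c d : Fin n} (h1 : (min a b : Fin n) = min c d)
    (h2 : (max a b : Fin n) = max c d) : s(a, b) = s(c, d) := by
  rw [Sym2.eq_iff]
  rcases le_total a b with h | h <;> rcases le_total c d with h' | h' <;> simp_all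

theorem canAvoid_1423 {n : ℕ} (G : SimpleGraph (Fin n)) : CanAvoid G {P5_1423} := by
  refine ⟨symLabel fun a b => n * (b : ℕ) + a, ?_, ?_⟩
  · intro e _ f _ h
    induction e using Sym2.ind with | _ a b
    induction f using Sym2.ind with | _ c d
    simp only [symLabel_mk] at h
    obtain ⟨h1, h2⟩ := key_eq (Fin.is_lt _) (Fin.is_lt _) h
    exact sym2_eq_of_minmax (Fin.ext h2) (Fin.ext h1)
  · rintro H rfl hc
    obtain ⟨a, b, c, d, e, hn, -, -, -, -, o1, o2, o3⟩ := contains_1423 hc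
    simp only [symLabel_mk] at o1 o2 o3
    have k1 := key_le (Fin.is_lt _) o1
    have k2 := key_le (Fin.is_lt _) o2
    have k3 := key_le (Fin.is_lt _) o3
    simp only [Fin.coe_max] at k1 k2 k3
    simp [Fin.ext_iff] at hn
    omega

theorem canAvoid_2314 {n : ℕ} (G : SimpleGraph (Fin n)) : CanAvoid G {P5_2314} := by
  refine ⟨symLabel fun a b => n * (a : ℕ) + b, ?_, ?_⟩
  · intro e _ f _ h
    induction e using Sym2.ind with | _ a b
    induction f using Sym2.ind with | _ c d
    simp only [symLabel_mk] at h
    obtain ⟨h1, h2⟩ := key_eq (Fin.is_lt _) (Fin.is_lt _) h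
    exact sym2_eq_of_minmax (Fin.ext h1) (Fin.ext h2)
  · rintro H rfl hc
    obtain ⟨a, b, c, d, e, hn, -, -, -, -, o1, o2, o3⟩ := contains_2314 hc
    simp only [symLabel_mk] at o1 o2 o3
    have k1 := key_le (Fin.is_lt _) o1
    have k2 := key_le (Fin.is_lt _) o2
    have k3 := key_le (Fin.is_lt _) o3
    simp only [Fin.coe_min] at k1 k2 k3
    simp [Fin.ext_iff] at hn
    omega

/-- Bipartite labelling: the vertex in the first class is the primary key. -/
def bipLabel {n : ℕ} (C : Fin n → Bool) : Sym2 (Fin n) → ℕ :=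
  symLabel fun a b => if C a then n * (a : ℕ) + b else n * (b : ℕ) + a

theorem bipLabel_mk {n : ℕ} (C : Fin n → Bool) {a b : Fin n} (ha : C a = true)
    (hb : C b = false) : bipLabel C s(a, b) = n * (a : ℕ) + b := by
  rw [bipLabel, symLabel_mk]
  rcases le_total a b with h | h <;> simp [h, ha, hb]

theorem bipLabel_mk' {n : ℕ} (C : Fin n → Bool) {a b : Fin n} (ha : C a = false)
    (hb : C b = true) : bipLabel C s(a, b) = n * (b : ℕ) + a := by
  rw [Sym2.eq_swap, bipLabel_mk C hb ha]

theorem canAvoid_bip {n : ℕ} (G : SimpleGraph (Fin n)) (hG : G.Colorable 2) :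
    CanAvoid G {P5_1423, P5_2314} := by
  obtain ⟨C0⟩ := hG
  let C : Fin n → Bool := fun v => C0 v = 0
  have hC : ∀ u v, G.Adj u v → C v = !C u := by
    intro u v huv
    have h := C0.valid huv
    simp only [C]
    generalize C0 u = x at *
    generalize C0 v = y at *
    revert x y
    decide
  refine ⟨bipLabel C, ?_, ?_⟩
  · have wl : ∀ e ∈ G.edgeSet, ∃ a b, C a = true ∧ C b = false ∧ e = s(a, b) := by
      intro e he
      induction e using Sym2.ind with | _ a b
      have := hC a b he
      cases h : C a
      · exact ⟨b, a, by simp [this, h], h, Sym2.eq_swap⟩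
      · exact ⟨a, b, h, by simp [this, h], rfl⟩
    intro e he f hf h
    obtain ⟨a, b, ha, hb, rfl⟩ := wl e he
    obtain ⟨c, d, hc, hd, rfl⟩ := wl f hf
    simp only [bipLabel_mk C ha hb, bipLabel_mk C hc hd] at h
    obtain ⟨h1, h2⟩ := key_eq (Fin.is_lt _) (Fin.is_lt _) h
    rw [Fin.ext h1, Fin.ext h2]
  · rintro H (rfl | rfl) hc
    · obtain ⟨a, b, c, d, e, hn, h1, h2, h3, h4, o1, o2, o3⟩ := contains_1423 hc
      have g1 := hC _ _ h1
      have g2 := hC _ _ h2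
      have g3 := hC _ _ h3
      have g4 := hC _ _ h4
      simp [Fin.ext_iff] at hn
      cases h : C a <;> simp only [h, Bool.not_true, Bool.not_false] at g1 <;>
        simp only [g1, Bool.not_true, Bool.not_false] at g2 <;>
        simp only [g2, Bool.not_true, Bool.not_false] at g3 <;>
        simp only [g3, Bool.not_true, Bool.not_false] at g4 <;>
        simp only [bipLabel_mk C, bipLabel_mk' C, h, g1, g2, g3, g4] at o1 o2 o3 <;>
        have k1 := key_le (Fin.is_lt _) o1 <;>
        have k2 := key_le (Fin.is_lt _) o2 <;>
        have k3 := key_le (Fin.is_lt _) o3 <;>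
        omega
    · obtain ⟨a, b, c, d, e, hn, h1, h2, h3, h4, o1, o2, o3⟩ := contains_2314 hc
      have g1 := hC _ _ h1
      have g2 := hC _ _ h2
      have g3 := hC _ _ h3
      have g4 := hC _ _ h4
      simp [Fin.ext_iff] at hn
      cases h : C a <;> simp only [h, Bool.not_true, Bool.not_false] at g1 <;>
        simp only [g1, Bool.not_true, Bool.not_false] at g2 <;>
        simp only [g2, Bool.not_true, Bool.not_false] at g3 <;>
        simp only [g3, Bool.not_true, Bool.not_false] at g4 <;>
        simp only [bipLabel_mk C, bipLabel_mk' C, h, g1, g2, g3, g4] at o1 o2 o3 <;>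
        have k1 := key_le (Fin.is_lt _) o1 <;>
        have k2 := key_le (Fin.is_lt _) o2 <;>
        have k3 := key_le (Fin.is_lt _) o3 <;>
        omega

/-! ### The complete tripartite graph `K_{1,3,3}` cannot avoid the pair

The vertices are `0 | 1 2 3 | 4 5 6`.  The edge `{u, v}` with `u < v` is coded by the two-digit
number `10 * u + v`, and a literal `(x, y)` says that edge `x` precedes edge `y`.  The proof is a
list of clauses (disjunctions of literals), ending with the empty one, each obtained
from earlier ones, transitivity and the forbidden patterns by unit propagation. -/

/-- The complete tripartite graph `K_{1,3,3}`. -/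
def K133 : SimpleGraph (Fin 7) where
  Adj u v := ((u : ℕ) + 2) / 3 ≠ ((v : ℕ) + 2) / 3
  symm := ⟨fun _ _ h => Ne.symm h⟩
  loopless := ⟨fun _ h => h rfl⟩

theorem K133_colorable : K133.Colorable 3 := by
  refine ⟨SimpleGraph.Coloring.mk (fun u => ⟨((u : ℕ) + 2) / 3, by omega⟩) ?_⟩
  intro u v h h'
  exact h (by simpa using h')

theorem beq_false {x y : ℕ} : Nat.beq x y = false ↔ x ≠ y := by
  constructor
  · rintro h rfl
    rw [Nat.beq_refl] at h
    exact Bool.noConfusion h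
  · intro h
    rw [← Bool.not_eq_true]
    exact fun h' => h (Nat.eq_of_beq_eq_true h')

/-- Adjacency in `K133`, on natural numbers. -/
def adjB (u v : ℕ) : Bool :=
  Nat.blt u 7 && (Nat.blt v 7 && !(Nat.beq ((u + 2) / 3) ((v + 2) / 3)))

/-- Code of an edge. -/
def ed (u v : ℕ) : ℕ := bif Nat.blt u v then 10 * u + v else 10 * v + u

/-- Justification of one unit propagation: transitivity, one of the two forbidden
patterns on a path, or an already established clause (counted backwards). -/
inductive Reason
  | t (x y z : ℕ)
  | p (a b c d e : ℕ)
  | q (a b c d e : ℕ)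
  | r (i : ℕ)

/-- Is `a, b, c, d, e` a path in `K133`? -/
def pathB (a b c d e : ℕ) : Bool :=
  adjB a b && (adjB b c && (adjB c d && (adjB d e &&
    (!(Nat.beq a c) && (!(Nat.beq a d) && (!(Nat.beq a e) &&
      (!(Nat.beq b d) && (!(Nat.beq b e) && !(Nat.beq c e)))))))))

/-- The clause justified by a reason. -/
def reasonClause (db : List (List (ℕ × ℕ))) : Reason → Option (List (ℕ × ℕ))
  | .t x y z => bif Nat.beq x z then none else some [(y, x), (z, y), (x, z)]
  | .p a b c d e => bif pathB a b c d e then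
      some [(ed c d, ed a b), (ed d e, ed c d), (ed b c, ed d e)] else none
  | .q a b c d e => bif pathB a b c d e then
      some [(ed a b, ed c d), (ed b c, ed a b), (ed d e, ed b c)] else none
  | .r i => db[i]?

/-- Membership test. -/
def memB (x y : ℕ) : List (ℕ × ℕ) → Bool
  | [] => false
  | (a, b) :: S => (Nat.beq x a && Nat.beq y b) || memB x y S

/-- Remove from a clause the literals whose negation is in `S`. -/
def reduceC (S : List (ℕ × ℕ)) : List (ℕ × ℕ) → List (ℕ × ℕ)
  | [] => []
  | (x, y) :: c => bif memB y x S then reduceC S c else (x, y) :: reduceC S c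

/-- Unit propagation along the reasons, until a conflict is found. -/
def rup (db : List (List (ℕ × ℕ))) : List Reason → List (ℕ × ℕ) → Bool
  | [], _ => false
  | h :: hs, S =>
    match reasonClause db h with
    | none => false
    | some c =>
      match reduceC S c with
      | [] => true
      | [u] => rup db hs (u :: S)
      | _ :: _ :: _ => false

/-- Check a sequence of clauses with reasons, the last of which must be empty. -/
def checkProof : List (List (ℕ × ℕ) × List Reason) → List (List (ℕ × ℕ)) → Bool
  | [], [] :: _ => true
  | [], _ => false
  | (c, hs) :: rest, db =>
    (c.all (fun l => !(Nat.beq l.1 l.2)) && rup db hs (c.map Prod.swap)) &&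
      checkProof rest (c :: db)

section Soundness

/-- The vertex of `K133` with a given number. -/
def vx (u : ℕ) : Fin 7 := Fin.ofNat 7 u

/-- The label of a coded edge, with the code itself as a tie breaker. -/
def key (L : Sym2 (Fin 7) → ℕ) (x : ℕ) : ℕ ×ₗ ℕ := toLex (L s(vx (x / 10), vx (x % 10)), x)

/-- Truth of a literal. -/
def Holds (L : Sym2 (Fin 7) → ℕ) (l : ℕ × ℕ) : Prop := key L l.1 < key L l.2

/-- Truth of a clause. -/
def HoldsC (L : Sym2 (Fin 7) → ℕ) (c : List (ℕ × ℕ)) : Prop := ∃ l ∈ c, Holds L l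

variable {L : Sym2 (Fin 7) → ℕ}

theorem key_inj {x y : ℕ} (h : key L x = key L y) : x = y := by
  have := congrArg (fun z => (ofLex z).2) h
  simpa [key] using this

theorem adjB_iff {u v : ℕ} (h : adjB u v = true) :
    u < 7 ∧ v < 7 ∧ K133.Adj (vx u) (vx v) := by
  simp only [adjB, Bool.and_eq_true, Nat.blt_eq, Bool.not_eq_true', beq_false] at h
  obtain ⟨h1, h2, h3⟩ := h
  refine ⟨h1, h2, ?_⟩
  simp only [K133, vx, Fin.ofNat, Nat.mod_eq_of_lt h1, Nat.mod_eq_of_lt h2]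
  exact h3

theorem key_ed {u v : ℕ} (hu : u < 7) (hv : v < 7) :
    key L (ed u v) = toLex (L s(vx u, vx v), ed u v) := by
  unfold key ed
  rcases lt_or_ge u v with h | h
  · have h' : Nat.blt u v = true := by simpa using h
    have e1 : (10 * u + v) / 10 = u := by omega
    have e2 : (10 * u + v) % 10 = v := by omega
    simp only [h', cond_true, e1, e2]
  · have h' : Nat.blt u v = false := by
      rw [← Bool.not_eq_true, Nat.blt_eq]
      omega
    have e1 : (10 * v + u) / 10 = v := by omega
    have e2 : (10 * v + u) % 10 = u := by omega
    simp only [h', cond_false, e1, e2]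
    rw [Sym2.eq_swap]

theorem vx_ne {u v : ℕ} (hu : u < 7) (hv : v < 7) (h : u ≠ v) : vx u ≠ vx v := by
  intro h'
  apply h
  have := congrArg Fin.val h'
  simpa [vx, Fin.ofNat, Nat.mod_eq_of_lt hu, Nat.mod_eq_of_lt hv] using this

/-- A false literal between two different edges gives the strict reverse inequality. -/
theorem lt_of_not_holds (hL : (EOGraph.mk 7 K133 L).Valid) {a b c d : ℕ}
    (h1 : adjB a b = true) (h2 : adjB c d = true) (hne : s(vx a, vx b) ≠ s(vx c, vx d))
    (h : ¬ Holds L (ed c d, ed a b)) : L s(vx a, vx b) < L s(vx c, vx d) := by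
  obtain ⟨a1, b1, e1⟩ := adjB_iff h1
  obtain ⟨c1, d1, e2⟩ := adjB_iff h2
  unfold Holds at h
  rw [key_ed a1 b1, key_ed c1 d1, Prod.Lex.toLex_lt_toLex] at h
  have hle : L s(vx a, vx b) ≤ L s(vx c, vx d) := by
    by_contra hc
    exact h (Or.inl (by omega))
  rcases hle.lt_or_eq with hlt | heq
  · exact hlt
  · exact absurd (hL _ e1 _ e2 heq) hne

theorem pathB_iff {a b c d e : ℕ} (h : pathB a b c d e = true) :
    adjB a b = true ∧ adjB b c = true ∧ adjB c d = true ∧ adjB d e = true ∧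
      [vx a, vx b, vx c, vx d, vx e].Nodup := by
  simp only [pathB, Bool.and_eq_true, Bool.not_eq_true', beq_false] at h
  obtain ⟨h1, h2, h3, h4, n1, n2, n3, n4, n5, n6⟩ := h
  refine ⟨h1, h2, h3, h4, ?_⟩
  obtain ⟨la, lb, e1⟩ := adjB_iff h1
  obtain ⟨-, lc, e2⟩ := adjB_iff h2
  obtain ⟨-, ld, e3⟩ := adjB_iff h3
  obtain ⟨-, le, e4⟩ := adjB_iff h4
  simp [e1.ne, e2.ne, e3.ne, e4.ne, vx_ne la lc n1, vx_ne la ld n2, vx_ne la le n3,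
    vx_ne lb ld n4, vx_ne lb le n5, vx_ne lc le n6]

theorem reasonClause_sound (hL : (EOGraph.mk 7 K133 L).Valid)
    (hA : (EOGraph.mk 7 K133 L).AvoidsFam {P5_1423, P5_2314})
    {db : List (List (ℕ × ℕ))} (hdb : ∀ c ∈ db, HoldsC L c) {h : Reason} {c : List (ℕ × ℕ)}
    (hc : reasonClause db h = some c) : HoldsC L c := by
  cases h with
  | t x y z =>
    cases hxz : Nat.beq x z with
    | true => simp [reasonClause, hxz] at hc
    | false =>
      simp only [reasonClause, hxz, cond_false, Option.some.injEq] at hc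
      subst hc
      have hne : x ≠ z := beq_false.1 hxz
      by_contra hcon
      simp only [HoldsC, List.mem_cons, List.not_mem_nil, or_false, exists_eq_or_imp,
        exists_eq_left, Holds, not_or, not_lt] at hcon
      obtain ⟨h1, h2, h3⟩ := hcon
      exact hne (key_inj (le_antisymm (h1.trans h2) h3))
  | p a b c' d e =>
    cases hp : pathB a b c' d e with
    | false => simp [reasonClause, hp] at hc
    | true =>
      simp only [reasonClause, hp, cond_true, Option.some.injEq] at hc
      subst hc
      by_contra hcon
      simp only [HoldsC, List.mem_cons, List.not_mem_nil, or_false, exists_eq_or_imp,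
        exists_eq_left, not_or] at hcon
      obtain ⟨o1, o2, o3⟩ := hcon
      obtain ⟨h1, h2, h3, h4, hn⟩ := pathB_iff hp
      refine hA P5_1423 (by simp) (contains_1423_of hn (adjB_iff h1).2.2 (adjB_iff h2).2.2
        (adjB_iff h3).2.2 (adjB_iff h4).2.2 (lt_of_not_holds hL h1 h3 ?_ o1)
        (lt_of_not_holds hL h3 h4 ?_ o2) (lt_of_not_holds hL h4 h2 ?_ o3))
      all_goals
        simp only [List.nodup_cons, List.mem_cons, List.not_mem_nil, not_or] at hn
        simp only [ne_eq, Sym2.eq_iff]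
        grind
  | q a b c' d e =>
    cases hp : pathB a b c' d e with
    | false => simp [reasonClause, hp] at hc
    | true =>
      simp only [reasonClause, hp, cond_true, Option.some.injEq] at hc
      subst hc
      by_contra hcon
      simp only [HoldsC, List.mem_cons, List.not_mem_nil, or_false, exists_eq_or_imp,
        exists_eq_left, not_or] at hcon
      obtain ⟨o1, o2, o3⟩ := hcon
      obtain ⟨h1, h2, h3, h4, hn⟩ := pathB_iff hp
      refine hA P5_2314 (by simp) (contains_2314_of hn (adjB_iff h1).2.2 (adjB_iff h2).2.2
        (adjB_iff h3).2.2 (adjB_iff h4).2.2 (lt_of_not_holds hL h3 h1 ?_ o1)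
        (lt_of_not_holds hL h1 h2 ?_ o2) (lt_of_not_holds hL h2 h4 ?_ o3))
      all_goals
        simp only [List.nodup_cons, List.mem_cons, List.not_mem_nil, not_or] at hn
        simp only [ne_eq, Sym2.eq_iff]
        grind
  | r i => exact hdb c (List.mem_of_getElem? hc)

theorem memB_sound {x y : ℕ} {S : List (ℕ × ℕ)} (h : memB x y S = true) : (x, y) ∈ S := by
  induction S with
  | nil => simp [memB] at h
  | cons z S ih =>
    obtain ⟨a, b⟩ := z
    simp only [memB, Bool.or_eq_true, Bool.and_eq_true] at h
    rcases h with ⟨h1, h2⟩ | h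
    · rw [Nat.eq_of_beq_eq_true h1, Nat.eq_of_beq_eq_true h2]
      exact List.mem_cons_self
    · exact List.mem_cons_of_mem _ (ih h)

theorem reduceC_sound {S c : List (ℕ × ℕ)} (hS : ∀ l ∈ S, Holds L l) (hc : HoldsC L c) :
    HoldsC L (reduceC S c) := by
  obtain ⟨l, hl, hh⟩ := hc
  refine ⟨l, ?_, hh⟩
  induction c with
  | nil => simp at hl
  | cons z c ih =>
    obtain ⟨x, y⟩ := z
    cases hm : memB y x S with
    | true =>
      simp only [reduceC, hm, cond_true]
      rcases List.mem_cons.1 hl with rfl | hl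
      · exact absurd hh (lt_asymm (hS _ (memB_sound hm)))
      · exact ih hl
    | false =>
      simp only [reduceC, hm, cond_false]
      rcases List.mem_cons.1 hl with rfl | hl
      · exact List.mem_cons_self
      · exact List.mem_cons_of_mem _ (ih hl)

theorem rup_sound (hL : (EOGraph.mk 7 K133 L).Valid)
    (hA : (EOGraph.mk 7 K133 L).AvoidsFam {P5_1423, P5_2314})
    {db : List (List (ℕ × ℕ))} (hdb : ∀ c ∈ db, HoldsC L c) (hs : List Reason)
    (S : List (ℕ × ℕ)) (hS : ∀ l ∈ S, Holds L l) : rup db hs S = false := by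
  induction hs generalizing S with
  | nil => rfl
  | cons h hs ih =>
    unfold rup
    cases hc : reasonClause db h with
    | none => rfl
    | some c =>
      have h1 := reduceC_sound hS (reasonClause_sound hL hA hdb hc)
      simp only
      rcases hr : reduceC S c with _ | ⟨u, _ | ⟨w, r⟩⟩
      · rw [hr] at h1
        obtain ⟨l, hl, -⟩ := h1
        simp at hl
      · rw [hr] at h1
        obtain ⟨l, hl, hh⟩ := h1
        obtain rfl : l = u := by simpa using hl
        refine ih _ ?_
        intro l' hl'
        rcases List.mem_cons.1 hl' with rfl | hl'
        · exact hh
        · exact hS _ hl'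
      · rfl

theorem checkProof_sound (hL : (EOGraph.mk 7 K133 L).Valid)
    (hA : (EOGraph.mk 7 K133 L).AvoidsFam {P5_1423, P5_2314})
    (pf : List (List (ℕ × ℕ) × List Reason))
    (db : List (List (ℕ × ℕ))) (hdb : ∀ c ∈ db, HoldsC L c) : checkProof pf db = false := by
  induction pf generalizing db with
  | nil =>
    rcases db with _ | ⟨_ | ⟨l, c⟩, db⟩
    · rfl
    · obtain ⟨l, hl, -⟩ := hdb [] (by simp)
      simp at hl
    · rfl
  | cons z rest ih =>
    obtain ⟨c, hs⟩ := z
    rw [← Bool.not_eq_true]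
    intro hcheck
    simp only [checkProof, Bool.and_eq_true] at hcheck
    obtain ⟨⟨hne, hrup⟩, hrest⟩ := hcheck
    have hc : HoldsC L c := by
      by_contra hcon
      have := rup_sound hL hA hdb hs (c.map Prod.swap) (by
        intro l hl
        obtain ⟨⟨x, y⟩, hm, rfl⟩ := List.mem_map.1 hl
        have hxy : x ≠ y := beq_false.1 (by simpa using List.all_eq_true.1 hne _ hm)
        rcases lt_trichotomy (key L x) (key L y) with h | h | h
        · exact absurd ⟨_, hm, h⟩ hcon
        · exact absurd (key_inj h) hxy
        · exact h)
      rw [hrup] at this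
      exact Bool.noConfusion this
    have := ih (c :: db) (by
      intro c' hc'
      rcases List.mem_cons.1 hc' with rfl | hc'
      · exact hc
      · exact hdb _ hc')
    rw [hrest] at this
    exact Bool.noConfusion this

end Soundness

/-- Refutation certificate, part 1. -/
def cert1 : List (List (ℕ × ℕ) × List Reason) := [
  ([(25, 6), (6, 15), (16, 15), (3, 15), (25, 16), (3, 25)],
    [.q 0 6 1 5 2, .q 1 6 0 5 2, .q 1 6 0 2 5, .q 5 1 6 2 0, .p 1 5 2 6 0, .p 1 5 0 6 2,
     .p 5 1 0 6 2, .q 6 2 5 0 3, .p 1 6 2 5 0, .q 5 0 1 6 2, .q 5 2 6 0 3, .p 6 3 0 5 2,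
     .q 1 0 5 3 6, .p 1 6 2 0 3, .p 1 0 3 5 2, .p 1 5 3 0 2, .p 6 0 2 5 3]),
  ([(26, 6), (36, 25), (3, 26), (6, 25), (25, 16)],
    [.q 0 6 2 5 3, .p 5 3 0 6 2, .p 1 6 2 5 3, .p 0 6 3 5 2]),
  ([(25, 35), (2, 25), (36, 25), (26, 1), (3, 26), (6, 25), (36, 16)],
    [.q 3 5 2 6 0, .t 35 25 2, .p 1 6 3 5 2, .p 5 3 0 2 6, .q 1 6 3 5 0, .p 5 3 6 2 0,
     .p 5 0 3 6 2, .p 1 0 2 6 3]),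
  ([(2, 35), (35, 5), (36, 1), (35, 1), (35, 25), (2, 16)],
    [.p 1 0 2 5 3, .p 4 2 0 5 3, .q 1 0 5 2 4, .p 5 2 0 1 6, .q 5 0 1 6 3, .q 6 1 0 5 3]),
  ([(35, 2), (2, 1), (34, 25), (2, 24), (26, 25), (25, 16)],
    [.q 4 2 0 5 3, .q 1 0 2 5 3, .q 0 5 2 4 3, .p 1 0 5 2 6, .p 1 6 2 5 0]),
  ([(26, 25), (3, 26), (6, 25), (36, 15), (2, 15), (25, 16)],
    [.q 3 6 1 5 2, .q 5 2 6 1 4, .q 5 2 6 1 0, .q 5 2 6 3 0, .t 26 16 25, .q 1 6 2 0 3,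
     .p 1 6 0 2 5, .r 3, .p 1 4 2 6 0, .p 1 6 0 2 4, .r 2, .p 1 6 2 5 3, .p 1 5 3 6 2,
     .t 1 26 35, .p 4 3 5 2 6, .t 35 14 26, .t 1 26 36, .q 2 0 1 5 3, .r 0, .q 4 3 5 2 0, .r 1,
     .p 1 0 5 3 4, .p 1 4 3 5 0]),
  ([(25, 26), (26, 15), (6, 25), (36, 15), (2, 15), (3, 25)],
    [.q 6 2 5 3 0, .p 1 0 6 2 5, .q 6 2 5 1 0, .p 1 5 3 6 2, .q 3 5 2 6 0, .t 1 25 35,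
     .p 1 0 2 5 3, .p 1 5 2 6 3, .q 2 0 1 5 3, .q 6 0 2 5 3, .p 4 3 6 2 5, .t 1 25 36,
     .q 1 0 2 6 3, .q 2 0 6 3 4, .q 4 3 6 2 0, .p 1 0 6 3 4]),
  ([(16, 15), (25, 15), (3, 15), (25, 16), (3, 16), (3, 25)],
    [.q 1 5 2 0 3, .q 5 1 6 0 3, .q 5 1 6 3 0, .r 6, .q 1 5 2 6 0, .r 0, .q 5 2 6 1 0, .r 1,
     .q 3 0 1 6 2, .p 5 2 6 0 3, .q 1 0 3 6 2, .p 2 5 3 0 6, .p 1 6 0 3 5, .t 35 3 26,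
     .p 1 6 2 5 3, .p 1 0 3 5 2, .p 5 3 0 1 6, .p 5 3 6 1 0, .p 1 6 3 5 2, .t 1 36 25,
     .p 1 0 5 2 6, .q 6 1 0 5 2, .p 1 6 2 5 0, .p 1 6 0 5 2]),
  ([(26, 25), (5, 26), (25, 36), (25, 16), (3, 16)],
    [.q 5 2 6 1 0, .q 5 2 6 3 0, .p 1 0 5 2 6, .q 3 0 1 6 2, .t 1 36 25, .q 1 0 3 6 2]),
  ([(25, 35), (5, 16), (35, 16), (25, 15), (25, 16), (3, 16), (3, 25)],
    [.q 1 5 2 0 3, .p 6 0 3 5 2, .p 1 0 3 5 2, .p 1 6 3 5 2, .p 1 6 0 5 3, .q 0 6 3 5 2,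
     .p 1 6 3 5 0, .p 6 3 0 5 2, .p 1 6 2 5 0, .p 3 5 0 6 2, .r 0, .q 6 2 5 3 0, .t 1 26 35,
     .q 3 5 2 6 0, .p 6 2 0 1 5, .q 3 6 0 2 5, .p 1 5 2 6 0, .p 6 2 5 1 0, .q 5 3 6 2 0,
     .p 6 0 1 5 2, .q 6 3 5 1 0, .q 3 5 1 6 0, .q 1 5 3 6 0]),
  ([(1, 25), (25, 36), (25, 26), (35, 25), (2, 16), (25, 15)],
    [.p 6 1 0 2 5, .q 6 2 5 1 0, .p 6 3 5 2 0, .q 1 5 2 6 0, .p 6 0 2 5 3]),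
  ([(1, 15), (35, 1), (25, 1), (25, 36), (35, 26)],
    [.p 6 2 5 1 0, .p 1 5 2 6 3, .p 6 3 5 1 0, .p 1 5 3 6 2]),
  ([(25, 36), (25, 26), (35, 26), (35, 25), (2, 16), (25, 15), (3, 25)],
    [.q 1 5 2 0 3, .q 6 2 5 0 3, .p 1 5 0 2 6, .r 1, .t 1 25 35, .p 1 0 2 5 3, .p 6 3 5 2 0,
     .r 0, .p 6 3 0 2 5, .p 1 6 0 2 5, .p 4 3 0 2 5, .p 6 2 0 1 5, .q 5 0 2 6 3, .p 1 5 2 0 6,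
     .q 6 0 2 4 3, .q 6 2 0 1 4, .p 1 4 2 0 5, .q 4 2 0 6 3, .p 1 5 0 2 4]),
  ([(25, 26), (35, 26), (35, 25), (2, 16), (25, 15), (3, 25)],
    [.q 1 5 2 0 3, .t 26 25 3, .q 6 2 5 0 3, .r 0, .q 1 5 2 6 3, .t 36 15 25, .p 4 3 6 2 5,
     .q 0 5 2 6 3, .q 6 2 5 1 0, .q 6 2 5 1 4, .r 6, .q 2 5 0 6 3, .p 1 4 2 5 0, .p 1 5 2 6 0,
     .p 1 0 5 2 4, .p 4 3 0 6 2, .q 0 6 2 4 3, .p 6 0 4 2 5, .q 4 3 6 0 5, .t 4 25 36,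
     .q 2 5 0 4 3, .q 6 3 4 0 5]),
  ([(36, 15), (26, 25), (35, 26), (2, 16), (2, 15), (25, 16), (3, 16)],
    [.q 5 2 6 1 0, .p 1 5 3 6 2, .p 1 0 2 6 3, .p 1 6 3 0 2, .p 1 6 2 0 3, .q 5 2 6 0 3, .r 8]),
  ([(25, 15), (3, 15), (25, 16), (3, 16), (3, 25)],
    [.q 1 5 2 0 3, .r 7, .q 6 1 5 3 0, .q 6 1 5 0 3, .t 2 16 15, .r 5, .p 1 6 2 5 3, .r 1,
     .t 26 15 25, .q 0 5 1 6 2, .r 0, .t 36 15 25, .t 36 15 5, .r 6, .p 6 3 0 5 2, .p 1 6 2 5 0]),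
  ([(26, 25), (5, 26), (3, 36), (1, 6), (25, 16), (3, 16)],
    [.q 5 2 6 1 0, .r 7, .p 5 2 6 0 1, .p 5 2 6 3 0, .q 5 2 6 0 3]),
  ([(25, 6), (36, 16), (35, 25), (15, 25), (3, 15), (25, 16)],
    [.q 2 5 1 0 3, .t 1 16 25, .q 2 5 1 6 3, .p 6 0 2 5 3, .p 6 0 2 5 1, .p 2 0 3 5 1,
     .p 6 1 5 2 0, .p 2 0 1 5 3, .p 6 1 0 2 5, .p 6 3 5 1 0, .p 2 0 1 6 3, .q 6 1 0 2 4,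
     .p 4 3 0 1 5, .p 2 4 0 1 5, .q 6 1 0 4 3, .p 2 5 1 0 4, .q 4 0 1 6 3]),
  ([(16, 2), (6, 16), (36, 16), (1, 6), (1, 16), (15, 36), (1, 25)],
    [.p 2 0 1 6 3, .q 6 1 0 2 4, .t 1 36 15, .p 4 3 6 0 1, .p 2 4 0 1 5, .q 1 6 0 4 3,
     .p 2 5 1 0 4, .q 4 0 1 6 3]),
  ([(36, 25), (35, 25), (15, 25), (3, 15), (25, 16)],
    [.p 1 6 2 5 3, .t 15 16 25, .q 6 1 5 0 3, .q 6 1 5 3 0, .q 2 5 1 0 3, .q 2 5 1 6 0,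
     .p 2 5 1 0 6, .t 1 16 25, .q 2 5 1 6 3, .p 2 5 3 6 1, .r 1, .p 2 5 0 6 1, .r 0,
     .p 6 1 0 2 5, .q 2 0 6 1 5, .p 6 1 5 2 0, .q 6 0 2 5 3, .t 36 15 2, .q 6 3 5 2 0,
     .q 5 3 6 2 0])]

/-- Refutation certificate, part 2. -/
def cert2 : List (List (ℕ × ℕ) × List Reason) := [
  ([(35, 25), (15, 25), (3, 15), (25, 16)],
    [.q 2 5 1 6 3, .q 2 5 1 6 0, .q 2 5 1 0 3, .r 0, .q 2 5 3 6 0, .t 1 36 25, .p 6 0 3 5 1,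
     .p 6 3 0 1 5, .p 6 0 1 5 3, .p 6 3 5 1 0]),
  ([(3, 15), (25, 16), (3, 25), (3, 16)],
    [.r 5, .q 2 5 1 0 3, .q 2 5 1 6 0, .q 2 5 1 6 3, .t 15 16 25, .p 2 5 1 0 6, .t 36 15 3,
     .q 6 1 5 3 0, .q 6 1 5 0 3, .p 6 1 0 5 2, .p 1 6 2 5 0, .r 4, .r 0, .q 6 2 5 3 0,
     .q 3 5 2 0 1, .q 3 5 2 6 0, .t 35 2 16, .p 6 0 2 5 1, .p 6 1 0 2 5, .p 6 1 5 2 0]),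
  ([(25, 16), (3, 16), (3, 25)],
    [.r 0, .t 15 25 3, .q 2 5 1 6 0, .q 2 5 1 6 3, .q 3 0 6 1 5, .q 0 3 6 1 5, .q 6 0 3 5 1,
     .q 6 3 0 1 5, .q 6 3 0 5 1, .p 6 0 3 5 2, .q 1 0 6 3 5, .p 6 3 0 5 2, .t 35 16 25,
     .p 1 6 2 5 0, .t 5 16 25, .p 6 1 5 3 0, .q 0 1 6 3 5, .r 5, .p 6 1 5 0 3, .p 6 1 0 3 5,
     .t 26 25 3, .q 3 0 5 2 4, .p 2 5 3 0 1, .p 6 2 0 3 5, .p 2 5 1 0 3, .q 6 1 0 2 5,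
     .t 1 25 36, .p 1 0 5 2 4, .q 2 0 6 1 5, .p 6 3 5 2 0, .t 24 25 3, .p 6 3 0 2 5,
     .p 4 3 0 2 5, .p 2 4 3 0 5, .p 2 0 3 6 1, .q 6 0 2 4 3, .p 2 5 0 3 4, .p 4 0 1 6 3,
     .p 6 0 4 2 5, .q 4 3 0 1 5, .q 3 4 0 2 5, .p 6 1 0 4 3]),
  ([(15, 3), (2, 25), (3, 2), (16, 36), (15, 16), (3, 16)],
    [.p 5 0 3 6 1, .q 2 0 3 5 1, .p 6 3 5 2 0, .p 2 5 3 6 1, .t 35 16 2, .p 2 0 6 1 5,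
     .q 5 2 0 6 1, .q 3 0 6 1 5, .p 2 5 0 6 3, .q 6 0 3 5 1, .p 2 5 3 6 0]),
  ([(15, 36), (3, 16), (3, 25)],
    [.r 1, .q 5 1 6 3 0, .p 2 5 1 6 3, .q 6 1 5 2 0, .p 2 0 3 6 1, .q 3 0 2 5 1, .p 6 3 0 2 5,
     .r 0, .q 6 1 5 3 0, .t 35 25 16, .p 2 5 3 6 1, .q 2 5 3 6 0, .p 6 3 5 2 0, .p 6 0 3 5 1,
     .t 35 2 15]),
  ([(2, 35), (35, 16), (36, 15), (16, 25)],
    [.t 35 25 16, .p 1 0 2 5 3, .p 6 0 2 5 3, .t 35 2 16, .p 5 2 0 6 1, .p 5 2 0 1 6,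
     .p 2 5 1 6 0, .p 5 2 6 1 0, .q 3 5 1 6 0, .t 35 2 15, .q 6 1 5 2 0, .q 5 1 6 2 0,
     .q 2 6 1 5 3, .p 5 0 1 6 2, .q 1 6 2 5 3, .q 1 6 2 5 0, .t 1 35 26, .t 1 5 26, .q 6 3 5 1 0,
     .q 5 0 1 6 3, .q 5 3 6 1 0]),
  ([(2, 16), (16, 15), (2, 25), (3, 2), (35, 2), (35, 16), (16, 25)],
    [.p 1 6 2 0 3, .q 5 1 6 2 0, .q 2 6 1 5 3, .q 1 6 2 5 3, .t 35 26 2, .p 4 3 0 2 6,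
     .q 0 2 6 1 4, .q 5 2 0 4 3, .p 5 2 6 1 4, .q 4 0 2 5 3, .t 2 14 16, .p 1 6 2 0 4,
     .p 1 4 0 2 6]),
  ([(2, 15), (2, 25), (3, 2), (35, 16), (36, 15), (16, 25), (3, 16)],
    [.r 1, .q 6 1 5 2 0, .q 5 1 6 0 3, .q 0 6 1 5 3, .r 0, .q 5 2 0 1 6, .q 1 0 2 5 3,
     .q 2 0 1 5 3, .p 5 3 0 1 6, .q 6 3 5 1 0, .p 5 2 6 1 0, .p 2 0 5 3 6, .p 5 1 0 2 6,
     .p 1 6 3 5 0, .q 6 2 0 5 3, .p 2 6 0 5 3, .p 6 1 0 5 3, .q 1 6 0 5 3]),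
  ([(16, 15), (1, 2), (35, 1), (15, 2), (35, 2), (35, 16), (3, 16)],
    [.p 2 0 5 1 6, .t 2 15 16, .q 5 1 6 0 3, .p 4 3 5 1 6, .q 6 1 0 5 3, .t 35 5 16,
     .q 0 6 1 5 3, .q 6 0 1 5 3, .p 4 3 0 1 6, .q 1 6 0 5 3, .q 1 6 0 2 4, .q 2 0 1 4 3,
     .p 1 6 0 3 5, .p 2 6 0 5 3, .q 1 4 2 0 6, .q 5 3 0 2 6, .q 5 3 0 1 4, .q 1 5 0 2 6,
     .q 2 4 1 0 3, .q 1 6 2 0 3, .q 0 5 1 4 3, .p 2 4 1 0 6, .q 2 6 1 0 3, .q 4 1 0 5 3,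
     .p 2 6 0 1 4]),
  ([(2, 25), (35, 16), (3, 15), (36, 15), (16, 25), (3, 16)],
    [.r 3, .p 1 5 3 0 2, .p 2 0 3 5 1, .r 1, .t 2 15 25, .t 36 2 15, .p 2 0 1 5 3, .q 2 5 1 0 3,
     .q 5 2 0 6 3, .q 1 0 2 5 3, .r 0, .q 6 1 5 0 3, .p 2 5 0 6 1, .p 2 5 1 6 0, .p 2 0 6 1 5,
     .q 6 0 1 5 3, .q 2 0 1 6 3, .q 1 0 6 3 5, .q 5 3 6 1 0, .p 2 0 6 3 5]),
  ([(35, 16), (3, 15), (3, 16), (3, 25)],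
    [.r 5, .r 7, .r 4, .p 2 0 3 5 1, .r 0, .p 6 3 0 2 5, .t 2 25 16, .q 0 2 5 1 6, .p 2 0 3 6 1,
     .p 2 0 1 6 3, .q 1 5 2 0 3, .p 2 0 1 5 3, .q 2 5 1 0 3, .q 1 0 2 5 3, .r 1, .q 6 1 5 2 4,
     .p 4 3 6 1 5, .q 6 1 5 0 3, .p 2 0 6 1 5, .q 0 5 1 6 3, .p 2 5 1 6 0, .p 2 4 1 5 0,
     .q 0 6 1 4 3, .p 2 5 0 1 4, .q 4 1 0 6 3]),
  ([(35, 2), (16, 35), (3, 15), (3, 16)],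
    [.q 6 1 5 3 0, .q 5 1 6 0 3, .t 35 16 3, .p 2 0 3 5 1, .t 35 16 2, .q 5 3 0 2 6,
     .p 2 6 1 5 3, .q 1 6 2 0 3, .p 5 1 6 2 0, .q 2 6 1 0 3, .q 2 6 1 5 0, .p 2 6 0 1 5,
     .p 5 1 0 2 6, .p 2 6 1 0 5, .q 5 1 0 2 4, .p 2 0 1 5 3, .t 1 35 16, .q 6 0 1 5 3,
     .p 4 3 0 1 6, .p 2 4 1 0 6, .q 5 0 1 4 3, .p 2 6 0 1 4, .q 4 1 0 5 3]),
  ([(15, 2), (2, 35), (16, 15), (16, 35), (36, 15), (3, 16)],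
    [.q 5 1 6 0 3, .t 36 2 15, .t 35 2 15, .t 2 15 16, .p 2 0 3 6 1, .q 3 5 1 0 6, .p 2 0 1 6 3,
     .p 5 3 0 1 6, .p 5 3 6 1 0]),
  ([(1, 16), (16, 2), (2, 15), (16, 35), (36, 15), (16, 25), (3, 16)],
    [.p 5 2 6 1 0, .p 5 3 6 1 0, .p 5 1 0 2 6, .p 2 0 1 6 3, .p 5 1 6 2 0, .p 5 0 3 6 1,
     .q 3 6 1 5 0, .p 2 6 1 5 0, .t 36 5 15]),
  ([(16, 2), (2, 15), (2, 35), (6, 15), (16, 35), (36, 15), (16, 25), (3, 16)],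
    [.q 0 2 5 1 6, .t 35 16 3, .p 5 1 6 0 2, .q 5 2 0 1 6, .t 35 2 6, .p 5 3 0 6 1, .q 1 6 0 2 4,
     .r 0, .p 5 3 0 1 6, .p 4 3 0 1 6, .p 2 5 0 1 6, .q 3 5 1 0 6, .q 5 3 0 1 4, .q 3 5 0 1 6,
     .p 2 6 1 5 3, .p 4 2 0 5 3, .p 6 2 0 5 3, .q 0 1 5 2 6, .q 1 0 5 2 4, .p 5 0 6 2 4,
     .q 5 1 0 4 3, .q 5 0 1 4 3, .p 5 0 4 2 6, .q 4 0 1 5 3, .q 4 1 0 5 3, .q 1 0 4 2 6,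
     .p 5 2 0 1 4, .q 2 4 1 0 3, .q 1 4 2 0 6]),
  ([(35, 1), (2, 16), (2, 35), (16, 35), (3, 25)],
    [.p 1 0 3 5 2, .t 1 35 16, .p 1 0 2 5 3, .p 5 2 0 1 6]),
  ([(16, 5), (36, 25), (1, 36), (1, 26), (36, 35), (2, 16), (3, 16)],
    [.p 5 0 1 6 2, .p 5 0 1 6 3, .p 5 0 2 6 1, .p 2 0 3 6 1, .p 5 0 3 6 1, .q 3 6 2 5 0,
     .q 5 3 6 2 0, .q 2 6 3 5 0]),
  ([(36, 25), (3, 36), (2, 26), (1, 36), (1, 26), (36, 35), (26, 15), (2, 16), (16, 35), (36, 15), (16, 25), (3, 16)],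
    [.p 5 2 6 3 0, .r 0, .q 3 6 1 5 0, .q 2 6 1 5 0, .q 1 6 3 5 0, .q 1 6 2 5 3, .q 1 6 2 5 0,
     .p 5 0 3 6 2, .p 5 3 6 2 0, .p 5 0 2 6 3]),
  ([(3, 15), (3, 16), (3, 25)],
    [.r 13, .r 15, .r 7, .q 6 1 5 3 0, .q 5 1 6 0 3, .r 6, .r 5, .r 3, .q 5 1 6 2 0, .r 2,
     .p 5 3 0 1 6, .q 6 3 5 1 0, .p 5 2 6 1 0, .p 5 3 6 1 0, .t 1 25 16, .p 5 1 0 2 6,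
     .p 5 1 0 3 6, .q 6 2 5 1 0, .r 0, .t 36 25 16, .q 5 2 6 3 0, .p 5 0 3 6 1, .q 3 6 1 5 0,
     .q 5 0 3 6 2, .t 5 16 3]),
  ([(3, 16), (3, 25)],
    [.r 16, .r 14, .r 0, .t 15 16 3, .t 36 3 15, .q 6 1 5 2 4, .t 36 16 15, .p 2 5 0 3 6,
     .q 0 3 6 1 4, .p 1 6 3 0 5, .p 4 1 5 0 3, .p 6 1 5 0 3, .p 0 5 1 4 2, .p 5 0 1 6 3,
     .q 2 4 1 6 3, .q 5 1 0 3 6, .p 4 2 6 1 5, .q 0 1 5 3 6, .p 0 5 1 6 2, .p 2 5 3 0 1,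
     .q 2 6 1 0 3, .p 2 5 1 0 3, .p 2 6 1 0 5, .t 1 25 26, .p 6 2 5 0 1, .q 6 2 5 0 3])]

/-- Refutation certificate, part 3. -/
def cert3 : List (List (ℕ × ℕ) × List Reason) := [
  ([(3, 15), (35, 1), (3, 25)],
    [.r 0, .t 16 25 3, .p 2 5 3 0 1, .p 2 6 1 0 3, .p 0 1 6 2 5, .q 5 3 0 1 6, .q 0 3 5 2 6,
     .q 1 6 2 5 3, .q 0 3 5 1 6, .q 2 6 1 5 3, .t 26 15 3, .p 2 6 0 3 5, .q 5 2 6 0 3,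
     .p 2 5 3 0 6, .q 0 6 2 5 1, .p 5 1 6 0 3, .q 2 6 0 1 5]),
  ([(35, 1), (3, 25)],
    [.r 1, .t 16 25 3, .q 5 3 0 1 6, .p 2 5 3 0 1, .q 0 3 5 2 6, .p 2 6 1 0 3, .p 0 1 6 2 5,
     .r 0, .t 15 25 3, .p 2 5 1 0 3, .q 2 5 1 0 6, .p 0 1 5 2 6, .q 2 6 0 1 5, .p 0 6 2 5 1,
     .q 0 6 2 5 3]),
  ([(3, 1), (15, 3), (3, 25)],
    [.t 15 25 3, .r 0, .r 2, .t 1 3 16, .p 2 5 1 0 3, .t 1 3 15, .p 3 5 0 1 6, .t 1 25 35,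
     .q 2 5 0 1 6, .q 2 5 1 0 4, .q 0 1 5 3 4, .p 4 0 3 5 2, .p 4 3 0 5 2, .q 3 4 0 5 1,
     .q 0 4 3 5 1]),
  ([(25, 35), (16, 2), (15, 1), (15, 3), (3, 25)],
    [.r 0, .t 1 25 3, .q 0 1 5 2 6, .r 1, .q 0 1 5 3 6, .r 3, .t 16 25 3, .q 3 5 2 6 1,
     .q 3 5 2 0 1, .q 2 6 3 5 1, .q 2 0 3 5 1, .q 3 6 2 5 1, .q 3 0 2 5 1, .t 1 36 25, .t 1 15 2,
     .p 3 6 1 0 2]),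
  ([(36, 5), (1, 36), (15, 6), (15, 36), (1, 35)],
    [.q 3 6 0 5 1, .q 6 3 5 0 1, .q 0 6 3 5 1, .q 5 3 6 0 1]),
  ([(5, 36), (35, 2), (36, 2), (16, 35), (16, 5)],
    [.p 2 0 5 3 6, .q 0 5 3 6 1, .p 2 0 6 3 5, .q 3 5 0 6 1]),
  ([(16, 1), (15, 1), (16, 5), (15, 3), (3, 25)],
    [.r 3, .t 1 25 3, .q 0 1 5 2 6, .r 4, .q 0 1 5 3 6, .r 6, .t 1 16 35, .p 5 2 0 1 6, .r 2,
     .q 2 5 3 6 1, .q 3 6 2 5 1, .q 2 6 3 5 1, .t 1 26 35, .p 2 6 0 1 5, .p 6 2 0 1 5,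
     .q 3 0 2 5 1, .q 2 0 3 6 1, .q 2 0 3 5 1, .r 0, .q 3 6 0 5 1, .r 1, .q 0 6 3 5 1,
     .p 2 6 3 0 1, .p 2 5 3 0 6, .t 26 25 3, .p 5 2 6 0 3, .q 5 2 6 0 1]),
  ([(15, 1), (16, 5), (15, 3), (3, 25)],
    [.r 5, .r 7, .t 16 25 3, .q 0 1 5 3 6, .p 2 5 1 6 3, .r 0, .p 5 2 6 1 0, .t 1 36 16,
     .p 2 6 0 1 5, .p 6 2 0 1 5, .r 2, .p 2 5 1 6 0, .q 3 0 2 5 1, .q 5 0 3 6 1, .p 2 5 0 3 6,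
     .q 2 0 3 6 1, .q 2 0 3 5 1, .p 4 1 6 3 0, .q 6 3 0 2 4, .r 1, .q 4 1 6 3 5, .p 2 4 3 0 5,
     .t 35 6 16, .t 14 3 16, .p 2 5 0 3 4, .p 2 5 3 0 6, .q 6 0 3 4 1, .q 4 3 0 6 1]),
  ([(15, 6), (15, 36), (16, 5), (15, 3), (3, 25)],
    [.p 3 6 1 5 0, .r 0, .q 5 1 0 3 6, .p 5 0 1 6 3, .r 6, .r 8, .q 5 1 0 6 2, .r 3,
     .q 5 0 3 6 1, .p 2 5 0 3 6, .q 3 0 5 2 6, .p 4 1 6 3 0, .p 6 2 0 5 1, .q 3 0 2 5 1,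
     .q 2 0 3 6 1, .q 2 0 3 5 1, .q 3 6 2 0 1, .q 6 3 0 2 4, .r 2, .q 2 6 3 4 1, .p 2 4 3 0 5,
     .p 2 5 3 6 1, .q 4 3 6 2 5, .p 2 5 0 3 4, .p 2 0 6 3 4, .q 4 3 0 6 1]),
  ([(15, 36), (16, 5), (15, 3), (3, 25)],
    [.r 1, .q 5 1 0 3 6, .p 3 6 1 5 0, .r 0, .t 36 15 6, .p 2 6 0 5 1, .p 3 6 0 5 1,
     .q 3 0 5 2 6, .q 6 3 0 5 1, .p 5 2 0 3 6, .p 4 1 0 3 6, .t 36 15 2, .q 3 6 0 2 4,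
     .q 5 0 3 4 1, .q 5 1 0 2 6, .p 5 0 6 2 4, .q 4 3 0 5 1, .q 3 6 2 0 1, .t 36 24 26,
     .q 2 6 3 0 1, .p 2 4 3 6 0, .p 2 6 0 3 4]),
  ([(6, 15), (16, 5), (15, 3), (3, 25)],
    [.r 2, .q 5 1 0 3 6, .r 10, .r 0, .p 5 1 6 3 0, .p 4 1 0 3 6, .r 8, .q 6 3 5 1 0,
     .q 5 3 6 0 1, .q 1 5 3 0 6, .p 2 6 3 5 1, .q 0 3 5 2 6, .q 5 3 0 4 1, .q 4 0 3 5 1,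
     .q 6 0 3 5 1, .p 2 5 0 3 6, .q 1 5 0 3 6, .p 5 2 0 3 6, .q 5 1 0 3 4, .p 2 6 0 5 1,
     .p 5 1 0 6 3, .q 3 0 5 2 6, .q 3 6 0 2 4, .q 5 0 3 4 1, .q 4 3 0 5 1, .p 5 2 0 3 4,
     .q 3 4 2 0 6, .q 2 4 3 0 1, .q 0 3 4 2 6, .p 2 4 0 3 6, .p 2 4 3 0 6, .q 3 0 4 2 6,
     .p 2 6 3 4 0, .p 2 6 0 4 3]),
  ([(16, 5), (15, 3), (3, 25)],
    [.r 9, .r 11, .r 3, .q 5 1 0 3 6, .r 1, .p 5 1 6 3 0, .q 6 3 5 1 0, .p 5 2 0 3 6,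
     .p 4 1 0 3 6, .q 5 3 6 0 1, .q 6 0 3 5 1, .q 1 5 3 0 6, .p 2 6 3 5 1, .q 0 3 5 2 6,
     .q 5 3 0 4 1, .q 4 0 3 5 1, .r 0, .q 5 1 0 6 2, .t 36 6 15, .q 3 6 2 0 1, .q 2 6 3 0 1,
     .q 3 0 6 2 4, .p 2 6 3 0 4, .p 2 4 0 6 3]),
  ([(15, 3), (3, 25)],
    [.r 12, .t 16 25 3, .r 0, .p 3 0 5 1 6, .t 5 3 16, .q 6 1 5 2 0, .p 0 3 6 1 5, .p 3 0 6 1 5,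
     .q 3 0 2 5 1, .p 2 5 1 6 3, .p 2 5 1 6 0, .q 2 0 3 6 1, .t 36 16 5, .p 2 5 0 6 1,
     .p 2 5 0 3 6, .q 3 6 0 2 5, .p 4 1 6 3 0, .q 6 3 0 2 4, .q 0 6 3 4 1, .p 2 4 3 0 5,
     .q 4 3 0 6 1, .p 2 5 0 3 4]),
  ([(15, 6), (3, 25)],
    [.r 0, .r 11, .r 13, .t 16 25 3, .p 2 5 1 6 0, .p 6 0 1 5 3, .p 3 5 1 0 6, .p 6 0 3 5 1,
     .p 3 5 0 6 1, .p 5 3 6 0 1, .q 3 0 5 1 6, .p 5 1 0 3 6, .q 5 0 3 6 1, .p 5 1 6 3 0, .r 8]),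
  ([(2, 36), (16, 2), (34, 5), (3, 36), (36, 5), (3, 25)],
    [.r 0, .p 5 1 6 0 2, .r 14, .t 16 25 3, .p 5 1 6 3 0, .p 3 6 1 5 2, .q 2 0 3 6 1,
     .q 2 0 6 3 4, .q 3 0 2 5 1, .q 3 0 2 6 1, .p 5 0 6 3 4, .p 4 0 2 5 1, .p 5 2 6 3 0,
     .p 5 0 4 3 6, .t 4 36 25]),
  ([(36, 2), (2, 5), (2, 35), (15, 36), (14, 36), (3, 36)],
    [.t 36 15 2, .q 6 3 0 2 4, .t 36 14 2, .p 5 3 0 2 4, .q 5 0 2 4 1, .q 4 2 0 5 1]),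
  ([(3, 36), (16, 5), (3, 25)],
    [.r 16, .r 3, .q 3 0 5 1 6, .q 5 0 3 6 1, .r 2, .p 5 1 6 0 3, .p 2 5 3 0 6, .t 15 3 16,
     .t 16 25 3, .p 4 1 6 3 0, .p 5 1 6 3 0, .p 3 6 1 5 2, .p 3 6 1 5 0, .q 1 5 3 6 0,
     .p 4 3 0 5 1, .p 2 6 0 5 1, .p 2 0 3 5 1, .q 2 0 5 3 4, .r 0, .p 5 0 2 6 3, .r 1,
     .p 5 0 3 6 2, .q 5 1 6 2 0, .p 5 2 6 3 0, .p 3 6 2 5 1]),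
  ([(2, 16), (2, 35), (16, 5), (3, 25)],
    [.r 4, .r 0, .p 5 1 0 3 6, .r 17, .t 16 25 3, .t 36 15 3, .r 31, .p 5 3 6 1 0, .t 36 25 3,
     .q 0 2 5 3 6, .r 3, .p 5 1 6 0 3, .p 2 5 3 0 6, .p 5 2 0 3 6, .p 5 3 6 0 2, .r 15,
     .q 3 0 5 1 6, .q 5 0 3 6 1, .q 1 0 5 3 6, .p 5 2 0 1 6, .q 2 0 6 1 4, .p 4 2 0 1 6,
     .t 1 25 35, .q 5 2 0 1 4, .p 3 0 6 1 4, .q 5 0 1 4 2, .p 4 0 3 5 2, .p 1 4 2 0 6,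
     .p 5 0 4 1 6, .p 1 6 0 2 4, .q 2 4 0 1 6, .q 4 2 0 3 6, .p 5 3 0 4 2]),
  ([(2, 14), (14, 24), (16, 4), (4, 5), (36, 2)],
    [.p 5 0 2 4 1, .q 2 0 4 1 6, .q 5 0 4 2 6, .q 4 0 2 6 3]),
  ([(3, 24), (34, 35), (34, 5), (16, 2), (16, 1), (2, 35), (36, 2), (36, 5), (6, 3)],
    [.q 2 0 5 3 6, .p 2 4 3 0 6, .p 5 0 3 4 2, .p 5 3 0 2 4, .q 5 3 4 0 6, .q 4 2 0 1 6,
     .q 4 0 5 3 6, .p 2 4 0 1 6, .q 5 0 4 1 6, .p 5 0 1 4 2, .r 0, .t 35 2 14, .q 5 0 2 4 1,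
     .p 5 1 4 2 0, .q 4 2 0 5 1, .p 5 0 2 4 3, .p 2 4 1 5 3, .t 34 15 2, .p 5 3 4 2 0,
     .p 2 4 3 5 1])]

/-- Refutation certificate, part 4. -/
def cert4 : List (List (ℕ × ℕ) × List Reason) := [
  ([(1, 24), (4, 3), (24, 2), (16, 1), (6, 1), (1, 15), (36, 1)],
    [.p 5 1 0 2 4, .p 2 4 1 0 6, .p 2 4 0 1 6, .q 5 1 0 2 6, .q 3 0 4 1 6, .p 2 6 0 1 4,
     .q 4 1 0 3 6]),
  ([(6, 4), (24, 1), (4, 15), (4, 25), (14, 2)],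
    [.p 5 2 4 0 6, .p 5 1 4 0 6, .q 1 4 2 0 6, .q 2 4 1 0 6]),
  ([(4, 6), (36, 1), (3, 25)],
    [.r 22, .r 8, .p 5 1 6 0 3, .p 2 5 3 0 6, .p 5 1 6 0 4, .p 5 3 6 0 4, .q 3 6 1 0 4,
     .q 1 6 3 0 4]),
  ([(4, 25), (16, 4), (4, 15), (24, 1), (24, 3), (1, 25), (6, 4), (36, 1)],
    [.p 5 2 4 0 3, .r 1, .q 3 0 4 1 6, .p 5 2 0 1 4, .q 4 1 0 3 6]),
  ([(25, 4), (24, 25), (2, 25), (6, 2)],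
    [.q 5 2 0 4 1, .q 5 2 4 0 6, .p 1 4 2 0 6]),
  ([(34, 5), (2, 35), (16, 5), (3, 25)],
    [.r 8, .t 36 25 3, .q 0 2 5 3 6, .r 7, .q 5 2 0 1 6, .r 12, .p 5 1 0 3 6, .r 25, .t 16 25 3,
     .t 36 15 3, .r 39, .p 5 3 6 1 0, .q 0 3 5 1 6, .r 2, .r 11, .p 5 1 6 0 3, .p 2 5 3 0 6,
     .p 5 3 6 0 1, .p 5 2 0 3 6, .p 5 3 6 0 2, .r 23, .q 0 1 5 3 6, .q 3 0 5 1 6, .q 5 0 3 6 1,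
     .q 4 3 5 0 1, .r 5, .q 4 2 0 3 6, .q 5 3 0 4 2, .t 24 25 3, .p 5 3 4 0 6, .p 1 0 6 3 4,
     .p 5 0 4 3 6, .q 2 4 0 3 6, .r 0, .p 5 2 4 0 3, .p 5 2 4 0 6, .t 4 15 3, .r 4, .p 1 6 0 4 2,
     .r 1]),
  ([(2, 35), (16, 5), (3, 25)],
    [.r 9, .t 36 25 3, .p 5 2 0 3 6, .r 26, .r 13, .q 3 0 5 1 6, .q 5 0 3 6 1, .q 2 0 5 3 6,
     .q 0 2 5 3 6, .q 5 0 2 6 3, .r 8, .q 5 2 0 1 6, .r 0, .p 4 3 0 5 1, .q 5 0 3 4 1, .t 2 15 5,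
     .p 1 4 0 3 6, .q 5 0 4 3 6, .q 4 0 5 1 6, .q 4 0 5 2 6, .p 4 0 1 5 2, .p 4 0 2 5 1]),
  ([(16, 5), (3, 25)],
    [.r 14, .r 25, .r 27, .t 16 25 3, .r 10, .p 5 1 0 3 6, .r 4, .r 0, .p 2 0 3 5 1,
     .p 4 0 1 5 3, .p 2 0 1 5 3, .p 5 1 4 0 6, .q 0 2 5 1 6, .q 2 0 5 1 6, .p 3 0 6 1 4,
     .p 4 3 5 0 2, .t 35 5 2, .q 4 3 5 0 1, .p 4 1 0 5 3, .t 34 2 35, .p 5 0 4 1 6, .q 5 0 2 4 3,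
     .q 5 2 0 4 3, .q 4 2 0 5 3, .q 4 0 2 5 3, .p 5 1 0 2 4, .q 2 0 4 1 6, .r 5]),
  ([(16, 3), (3, 25)],
    [.t 16 25 3, .r 26, .r 15, .t 15 3 16, .r 0, .t 5 3 16, .p 3 5 0 1 6, .p 2 0 5 1 6,
     .q 3 0 5 2 6, .q 6 1 0 3 4, .q 1 6 2 5 0, .p 5 1 0 3 4, .q 2 6 1 5 0, .t 34 3 16,
     .t 26 15 3, .q 5 1 6 2 0, .p 4 3 6 1 0, .q 3 0 2 6 1, .p 5 1 0 3 6, .q 2 0 3 6 1,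
     .p 5 1 6 3 0, .t 36 15 2]),
  ([(3, 25)],
    [.r 29, .r 0]),
  ([(1, 25), (2, 35), (25, 36), (5, 16), (3, 15)],
    [.r 0, .t 15 3 25, .p 6 0 1 5 2, .p 6 1 0 5 2, .p 3 6 2 5 0, .p 3 0 5 2 6, .p 1 5 0 6 2,
     .q 6 2 5 1 0, .t 26 15 3, .q 1 5 2 6 0, .p 6 2 0 3 5, .p 3 5 2 6 0, .p 6 2 5 3 0]),
  ([(1, 36), (25, 1), (25, 36), (3, 15)],
    [.r 1, .q 3 0 1 5 2, .q 1 0 3 5 2, .p 6 3 0 1 5, .p 6 2 5 1 0, .q 1 0 3 6 2, .r 59,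
     .t 26 3 25, .t 1 35 26, .p 1 0 6 2 5, .q 5 1 0 6 2, .p 1 5 2 6 0, .q 6 0 1 5 3,
     .p 5 3 0 6 2, .q 1 0 6 3 5]),
  ([(3, 26), (36, 1), (2, 35), (5, 36)],
    [.r 2, .p 1 0 3 6 2, .p 6 2 0 3 5, .q 2 6 3 5 0, .p 6 2 5 3 0]),
  ([(2, 35), (3, 36), (5, 16), (3, 15)],
    [.r 3, .t 36 3 25, .q 6 3 0 5 2, .r 2, .q 3 0 1 5 2, .q 1 0 3 5 2, .p 1 0 5 3 6, .r 1,
     .p 1 0 6 3 5, .q 6 3 0 1 4, .r 0, .q 5 3 0 6 2, .p 4 2 0 3 5, .p 1 4 0 3 5, .q 6 3 0 4 2,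
     .p 1 5 3 0 4, .q 4 0 3 6 2]),
  ([(3, 36), (5, 16), (3, 15)],
    [.r 4, .q 6 3 0 2 5, .q 6 3 0 5 2, .t 36 3 25, .r 0, .p 2 0 3 5 1, .p 1 5 3 0 2,
     .p 6 3 5 0 2, .p 6 3 5 2 0, .p 1 5 2 0 3, .p 3 6 2 0 5, .p 3 6 0 2 5, .t 36 2 15,
     .p 2 0 1 5 3, .p 6 2 5 0 3, .p 6 3 5 1 0, .q 1 5 3 6 0, .q 1 5 3 6 2, .p 6 3 0 1 5,
     .p 4 3 0 1 5, .q 2 0 6 3 5, .q 0 2 6 3 5, .q 6 3 0 1 4, .t 2 15 6, .q 6 2 0 1 5,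
     .p 1 4 3 0 5, .q 3 6 0 1 5, .q 1 0 6 2 5, .t 1 34 26, .p 1 5 0 3 4, .p 4 2 0 6 3,
     .p 4 3 6 0 1, .q 4 3 0 2 5, .p 6 2 4 3 0, .p 6 0 2 4 3, .p 6 0 3 4 2]),
  ([(3, 2), (2, 16), (5, 15), (36, 5)],
    [.r 5, .p 1 5 2 0 3, .t 2 3 16, .q 1 5 0 2 6, .p 1 6 3 0 5, .p 6 2 5 0 3]),
  ([(35, 6), (36, 35), (2, 3), (6, 16)],
    [.q 5 3 6 0 2, .q 1 6 0 3 5, .p 1 6 3 0 2]),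
  ([(5, 16), (3, 15)],
    [.r 7, .r 2, .p 1 5 0 3 6, .t 36 15 3, .p 5 1 0 3 6, .t 36 16 5, .q 2 5 0 3 6, .q 0 5 1 6 3,
     .q 5 0 1 6 3, .p 1 6 0 5 2, .t 5 25 16, .q 1 5 0 6 3, .q 1 0 5 3 6, .q 3 6 0 5 2,
     .q 0 6 1 5 2, .q 1 6 0 2 5, .r 1, .p 1 5 3 0 2, .q 6 3 5 0 2, .p 3 5 2 0 6, .r 0,
     .p 1 6 0 5 3, .q 0 6 3 5 2, .p 5 3 6 0 2, .q 3 5 0 1 4, .p 1 6 3 5 0, .p 4 2 0 3 6,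
     .q 1 6 3 0 2, .p 1 4 0 5 2, .t 35 16 3, .q 5 3 0 4 2, .t 4 25 36, .q 4 0 3 5 2,
     .p 1 6 3 0 4]),
  ([(3, 16), (16, 1), (3, 35), (34, 3), (6, 3)],
    [.p 5 3 0 1 6, .p 1 6 0 3 4, .q 5 3 0 1 4, .p 1 4 3 0 6]),
  ([(36, 25), (36, 5), (2, 35), (3, 15)],
    [.r 9, .q 6 3 0 5 2, .p 5 1 0 3 6, .q 6 3 5 0 2, .r 1, .q 3 0 5 1 6, .p 4 2 5 0 3,
     .q 0 2 5 3 6, .q 5 2 0 3 6, .q 5 2 0 3 4, .p 4 2 0 3 6, .q 5 3 6 0 2, .p 5 0 2 4 3,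
     .q 5 0 3 4 2, .q 6 0 3 5 2, .q 2 5 3 0 6, .q 4 3 0 5 2, .q 4 3 5 0 6, .t 6 15 3,
     .p 1 6 3 5 2, .p 5 1 0 3 4, .q 5 3 4 0 2, .q 0 3 5 1 6, .p 5 3 6 1 0, .t 1 34 24,
     .q 4 0 3 5 2, .p 5 3 4 0 1, .t 4 15 3, .r 0, .q 1 6 3 0 2, .q 3 6 1 0 2, .q 3 6 1 0 4,
     .q 5 2 0 1 6, .p 5 1 6 0 4, .t 1 4 25, .r 15])]

/-- Refutation certificate, part 5. -/
def cert5 : List (List (ℕ × ℕ) × List Reason) := [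
  ([(16, 3), (36, 5), (2, 35), (3, 15)],
    [.r 10, .q 6 3 0 5 2, .p 5 1 0 3 6, .r 0, .t 1 36 25, .q 3 0 1 5 2, .q 1 0 3 5 2, .r 2,
     .q 6 1 5 0 3, .q 5 3 0 1 6, .q 0 3 5 1 6, .p 0 5 3 6 1, .t 35 2 16, .q 1 6 3 0 2,
     .q 5 1 6 0 2, .t 36 25 2, .q 0 6 1 5 3, .p 1 6 0 2 5, .q 1 6 0 5 2]),
  ([(36, 5), (2, 3), (2, 35), (3, 15)],
    [.r 11, .r 3, .q 6 3 0 5 2, .q 6 3 5 0 2, .p 5 1 0 3 6, .r 1, .t 1 36 25, .p 4 2 5 3 6,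
     .q 3 0 1 5 2, .q 1 0 3 5 2, .q 3 5 0 1 6, .q 0 5 3 4 2, .q 4 3 0 5 2, .r 0, .q 0 3 6 1 4,
     .p 1 6 3 0 2, .p 1 6 0 3 4, .q 5 3 6 0 2, .p 1 4 3 6 0, .q 0 6 3 5 2]),
  ([(5, 36), (3, 15)],
    [.r 12, .r 4, .q 3 0 5 1 6, .p 6 3 0 5 1, .t 36 5 16, .q 5 0 3 6 1, .p 3 6 1 5 0,
     .q 3 6 1 5 2, .t 16 3 25]),
  ([(2, 35), (3, 15)],
    [.r 13, .r 0, .r 5, .q 6 1 5 0 3, .r 2, .r 1, .t 16 3 25, .p 1 5 2 0 3, .p 0 2 5 1 6]),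
  ([(3, 15)],
    [.r 14, .t 15 3 25, .r 6, .q 6 1 5 0 3, .r 0, .p 2 0 3 5 1, .p 1 5 3 0 2, .p 1 5 2 0 3,
     .p 2 0 1 5 3, .q 1 5 2 0 6, .p 0 2 5 1 6, .q 1 6 0 5 2, .t 16 3 25, .p 0 6 1 5 2,
     .q 5 3 0 1 6, .q 0 6 1 5 3, .q 0 3 5 1 6]),
  ([(6, 35), (35, 3), (35, 1), (36, 25), (16, 25), (35, 2)],
    [.r 0, .r 15, .q 1 5 3 0 6, .q 2 5 3 0 6, .p 2 6 0 3 5, .q 3 5 1 0 6, .q 3 5 2 0 1,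
     .q 3 5 2 0 6, .p 0 3 6 2 5, .p 0 6 1 5 2, .p 0 6 2 5 1, .p 0 1 5 2 6]),
  ([(35, 6), (36, 25), (36, 15), (16, 35), (26, 5), (16, 25), (15, 2)],
    [.r 16, .p 0 6 3 5 1, .p 0 6 3 5 2, .q 2 6 0 5 3, .p 2 6 1 5 3, .p 0 6 1 5 3, .p 5 1 0 6 2,
     .q 5 1 0 2 6, .p 0 1 6 2 5, .q 0 1 5 2 6, .p 0 3 5 2 6, .q 2 5 1 0 6, .p 0 6 2 5 3,
     .q 1 5 2 0 6]),
  ([(36, 25), (36, 15), (16, 35), (26, 5), (16, 25), (15, 2), (35, 2)],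
    [.r 17, .r 2, .r 0, .q 6 0 3 5 1, .q 2 5 3 0 6, .q 3 5 2 0 1, .q 3 5 2 0 6, .t 1 25 36,
     .q 3 0 6 2 5, .q 5 1 0 3 6, .q 5 3 0 2 6, .q 0 1 5 3 6, .r 1]),
  ([(25, 36), (26, 5), (36, 2), (36, 5), (35, 2)],
    [.p 0 2 5 3 6, .p 0 5 2 6 3, .p 0 2 6 3 5, .p 0 5 3 6 2]),
  ([(35, 26), (15, 36), (16, 35), (36, 25), (26, 5), (16, 25)],
    [.r 19, .q 3 5 2 6 1, .p 0 3 5 2 6, .q 2 5 3 0 1, .q 6 2 5 0 1, .p 0 1 5 3 6, .t 1 25 36,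
     .p 0 1 6 3 5]),
  ([(16, 35), (36, 25), (26, 5), (16, 25), (36, 2), (15, 2), (35, 2)],
    [.r 20, .r 2, .p 3 6 1 5 2, .r 0, .q 2 6 3 5 1, .p 0 2 6 3 5, .q 3 6 2 5 1, .p 0 1 5 3 6,
     .p 0 6 2 5 1, .q 2 5 3 0 1, .q 3 5 2 0 6]),
  ([(36, 25), (15, 26), (15, 36), (25, 16), (16, 2), (25, 5)],
    [.r 21, .q 0 5 2 6 3, .q 3 6 2 5 1, .p 0 5 2 6 1, .q 2 6 3 5 1, .q 1 6 2 0 3, .p 0 3 5 2 6,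
     .p 0 3 6 2 5]),
  ([(5, 26), (26, 1), (26, 2), (35, 36), (26, 3), (15, 36), (36, 5)],
    [.r 7, .q 1 5 0 3 6, .t 5 15 26, .t 36 26 5, .q 0 2 6 1 5, .q 2 6 3 0 1, .q 1 6 2 0 5,
     .p 0 1 6 3 5, .q 2 6 1 0 5, .p 0 5 3 6 1, .p 0 5 1 6 3]),
  ([(25, 36), (15, 36), (25, 16), (36, 5), (35, 2), (16, 3)],
    [.r 23, .q 6 3 0 5 2, .q 0 3 6 2 5, .p 0 2 5 3 6, .q 6 2 0 3 5, .q 6 3 5 0 1, .q 6 1 0 3 5,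
     .q 0 1 6 2 5, .r 0, .r 4, .p 3 6 2 0 1, .q 1 6 3 0 2, .p 0 5 3 6 1, .t 35 16 2,
     .p 0 1 6 3 5, .p 3 6 1 0 2]),
  ([(15, 36), (25, 16), (36, 5), (35, 2), (16, 3)],
    [.r 9, .r 24, .q 2 5 0 3 6, .q 1 5 0 3 6, .r 0, .q 0 5 2 6 3, .t 36 16 25, .q 6 2 0 5 3,
     .p 0 5 1 6 3, .q 0 5 1 6 2, .q 0 2 6 1 5, .r 2]),
  ([(25, 16), (36, 5), (16, 3), (35, 2)],
    [.r 10, .r 0, .p 0 3 6 1 5, .q 3 6 1 5 2, .p 0 3 5 1 6, .p 0 2 5 1 6, .t 35 16 25,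
     .q 1 6 3 5 2, .t 35 15 2, .p 0 6 3 5 2, .q 1 5 3 0 6]),
  ([(2, 15), (16, 2), (16, 25)],
    [.r 26, .r 11, .p 3 0 2 5 1, .q 0 2 5 1 6, .p 3 0 1 5 2, .q 5 2 0 1 6]),
  ([(36, 15), (36, 5), (35, 2), (16, 3)],
    [.r 27, .r 12, .q 2 5 0 3 6, .r 1, .q 0 5 2 6 1, .p 0 3 6 1 5, .p 0 3 5 1 6, .t 35 16 2,
     .r 0, .t 36 2 15, .r 9, .r 8]),
  ([(25, 36), (16, 35), (15, 25), (16, 25), (36, 5), (35, 2)],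
    [.r 28, .q 2 5 0 3 6, .q 0 5 2 6 1, .q 6 2 0 5 3, .p 0 2 5 3 6, .r 9, .q 2 5 3 6 1,
     .p 3 6 2 5 1, .q 6 3 5 0 1, .q 0 2 6 3 5, .q 3 5 2 0 1, .p 0 1 5 2 6, .t 1 35 26,
     .p 0 1 6 2 5]),
  ([(36, 5), (35, 2), (16, 3)],
    [.r 29, .q 6 3 0 5 2, .q 2 5 0 3 6, .r 3, .q 0 5 2 6 1, .r 1, .p 3 6 1 5 2, .p 2 5 1 6 3,
     .p 3 0 2 5 1, .p 0 5 3 6 1, .r 0, .r 8, .t 36 2 25, .p 4 2 0 3 6, .t 35 36 2, .q 5 2 0 3 4,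
     .q 4 2 0 3 5, .q 6 3 5 2 4, .q 0 2 4 3 5])]

/-- Refutation certificate, part 6. -/
def cert6 : List (List (ℕ × ℕ) × List Reason) := [
  ([(36, 25), (35, 2), (16, 3)],
    [.r 30, .r 0, .p 2 0 5 3 6, .q 1 6 3 0 5, .p 2 5 3 6 1, .t 35 25 36, .q 0 5 3 6 1,
     .p 0 1 6 3 5, .q 2 5 3 0 6, .q 2 5 3 0 1, .t 1 25 36, .q 3 5 0 6 1, .q 6 1 0 3 5,
     .p 2 5 0 1 6]),
  ([(16, 35), (16, 25), (25, 36), (5, 36), (35, 2)],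
    [.r 31, .p 6 3 5 2 0, .t 2 25 16, .q 0 5 3 6 1, .q 2 5 3 6 1, .q 3 5 0 2 6, .q 3 5 2 0 1,
     .q 3 5 2 6 1, .q 0 5 2 6 1, .p 3 0 5 2 6, .q 2 5 0 1 6, .q 6 1 0 2 5, .p 0 1 6 2 5,
     .p 3 5 0 1 6, .t 1 35 26]),
  ([(16, 25), (35, 2), (16, 3)],
    [.r 17, .r 32, .r 1, .p 6 3 5 2 0, .r 2, .q 1 6 3 0 5, .t 2 25 16, .r 0, .t 35 25 16,
     .p 0 3 5 1 6, .q 2 5 3 0 1, .p 6 3 5 0 1, .q 6 1 0 3 5, .q 0 1 6 3 5, .t 1 36 25,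
     .q 3 6 1 0 5, .p 2 6 1 0 5, .p 0 1 6 2 5, .p 0 2 6 1 5, .p 0 1 5 2 6]),
  ([(35, 25), (35, 16), (35, 2), (16, 3)],
    [.r 33, .r 18, .p 0 3 5 1 6, .r 0, .r 2, .r 3, .q 1 6 3 0 5, .p 1 6 2 5 3, .q 2 5 3 0 1,
     .q 6 1 0 3 5, .q 0 1 6 3 5, .q 6 3 0 1 5, .q 3 6 1 0 2, .q 3 6 1 0 5, .q 0 3 6 2 5,
     .p 0 2 6 1 5, .p 0 5 1 6 2, .q 2 6 3 0 5, .q 6 2 0 3 5, .p 0 5 2 6 1, .q 3 6 2 0 5,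
     .q 0 2 6 3 5]),
  ([(35, 1), (35, 16), (35, 2), (16, 3)],
    [.r 19, .p 0 3 5 1 6, .r 1, .r 3, .r 4, .q 1 6 3 0 5, .q 6 1 0 3 5, .q 0 1 6 3 5,
     .q 6 3 0 1 5, .q 3 6 1 0 2, .q 3 6 1 0 5, .q 0 3 6 2 5, .p 0 2 6 1 5, .q 3 5 0 1 6,
     .p 0 5 1 6 2, .q 2 6 3 0 5, .q 6 2 0 3 5, .q 0 5 3 6 2, .p 0 5 2 6 1, .q 3 6 2 0 5,
     .q 0 2 6 3 5]),
  ([(25, 1), (35, 16), (35, 2), (16, 3)],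
    [.r 20, .r 0, .t 1 16 35, .q 6 1 0 3 4, .p 0 3 5 1 6, .p 3 0 6 1 5, .p 6 0 1 5 3,
     .q 3 5 1 6 2, .t 1 2 35, .r 1, .q 3 5 2 0 6, .r 5, .p 6 3 5 0 2, .q 1 6 3 0 5, .q 6 1 0 2 5,
     .p 6 2 5 1 0, .t 36 16 2, .p 1 6 2 0 5, .q 0 2 6 1 5, .q 2 0 6 1 5, .p 3 4 0 1 5,
     .p 3 6 2 0 1, .p 6 2 5 0 1, .q 6 2 0 3 5, .t 35 6 2, .p 3 5 1 0 4, .p 3 0 1 6 2,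
     .p 3 4 1 0 5, .q 3 0 6 2 5, .q 1 6 0 3 5, .p 4 0 2 6 1, .p 3 5 0 1 4, .p 4 1 6 0 3,
     .p 4 2 0 6 1, .p 6 2 4 0 1, .q 4 1 0 2 5, .p 6 0 1 4 2, .p 6 0 2 4 1]),
  ([(35, 16), (35, 2), (16, 3)],
    [.r 2, .r 0, .q 3 5 2 0 1]),
  ([(35, 2), (16, 3)],
    [.r 7, .p 2 0 5 3 6, .r 4, .r 0, .t 35 16 25, .t 35 16 2, .q 0 5 3 6 1, .p 0 1 6 3 5,
     .q 3 5 2 0 1, .q 6 1 0 2 5, .q 3 5 0 2 4, .q 3 5 0 2 6, .q 0 1 6 2 5, .p 4 2 5 0 1,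
     .q 1 6 2 0 5, .p 3 6 1 0 5, .q 2 6 1 0 5]),
  ([(5, 26), (25, 5), (16, 5), (16, 2), (16, 1), (2, 35)],
    [.q 0 5 2 6 1, .p 3 5 0 2 6, .q 5 0 2 6 1, .q 0 1 6 2 5, .q 2 0 5 1 6, .q 6 2 0 1 5]),
  ([(2, 36), (36, 35), (36, 1), (25, 2), (16, 2), (2, 35)],
    [.q 0 2 5 3 6, .q 5 3 6 0 2, .p 3 6 0 2 5, .q 0 6 3 5 2, .p 3 5 2 0 6, .q 3 6 0 1 5,
     .p 5 1 6 0 2]),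
  ([(2, 15), (36, 2), (16, 36), (25, 2)],
    [.t 36 15 2, .q 0 2 5 1 6, .q 3 6 1 5 2]),
  ([(16, 2), (25, 1), (16, 35), (2, 35)],
    [.r 26, .p 3 5 2 0 1, .q 1 5 3 0 2, .q 5 2 0 1 6, .p 3 6 1 0 2, .q 0 2 5 3 6, .p 0 1 6 3 5,
     .q 1 6 3 5 2, .r 1, .r 0, .p 3 5 1 0 2, .p 0 1 5 3 6, .q 3 5 1 0 6, .q 3 6 1 5 2,
     .t 36 25 15, .p 0 6 1 5 2]),
  ([(36, 16), (16, 35), (16, 3)],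
    [.r 42, .r 4, .q 1 6 3 0 2, .q 1 6 3 5 2, .q 5 2 0 3 6, .q 0 2 5 3 6]),
  ([(15, 2), (2, 6), (26, 1), (15, 36), (1, 36), (2, 16), (2, 1), (2, 35)],
    [.p 3 5 1 0 2, .q 6 2 0 1 5, .t 2 15 6, .p 0 1 5 3 6, .p 3 5 0 2 6, .q 0 2 6 1 5,
     .q 1 5 0 6 2, .q 6 3 5 0 2, .q 0 5 1 6 2, .p 6 3 5 0 1, .p 3 6 1 0 5]),
  ([(25, 2), (16, 1), (2, 16), (2, 1), (16, 36), (2, 35)],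
    [.r 29, .q 3 6 1 0 2, .q 1 5 3 0 2, .t 2 25 16, .p 1 6 0 2 5, .q 3 6 1 5 2, .q 0 1 6 2 5,
     .p 3 5 2 0 6, .r 0, .q 3 5 1 0 2, .p 3 5 0 1 6, .q 1 6 0 5 2, .q 6 1 5 0 2, .q 0 6 1 5 2,
     .q 5 1 6 0 2]),
  ([(2, 15), (2, 14), (16, 1), (1, 36), (2, 16), (25, 1), (15, 35)],
    [.r 45, .q 0 1 6 3 4, .t 34 16 2, .p 4 2 0 1 6, .q 3 5 1 0 2, .q 1 0 3 5 2, .p 3 5 0 1 6,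
     .q 3 0 1 4 2, .p 3 6 1 0 5, .q 6 1 5 0 2, .q 1 4 3 0 2, .q 5 0 1 4 2, .q 5 1 6 0 2,
     .q 3 4 1 0 2, .q 4 1 0 5 2, .q 6 0 1 5 2, .p 3 4 1 0 6, .p 3 6 0 1 4]),
  ([(16, 1), (2, 16), (25, 1), (16, 36), (2, 35)],
    [.r 31, .q 3 6 1 0 2, .p 3 5 2 0 1, .q 1 5 3 0 2, .p 4 2 0 1 6, .r 1, .q 5 2 0 1 4, .r 0,
     .p 6 1 5 2 0, .t 2 15 16, .q 4 2 0 1 5, .q 6 1 5 2 4, .q 0 2 4 1 5]),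
  ([(25, 1), (16, 35), (16, 3)],
    [.r 32, .r 4, .r 9, .p 3 5 2 0 1, .r 5, .r 0, .q 6 1 0 3 5, .q 6 1 0 5 2, .q 6 1 0 3 4,
     .p 3 0 5 1 6, .t 35 16 5, .p 3 4 1 0 2, .p 3 0 6 1 5, .p 3 5 1 6 0, .p 3 5 1 0 6,
     .p 4 2 0 6 1, .p 3 5 0 6 1, .p 6 0 2 4 1, .q 5 3 0 6 1, .q 3 5 0 6 2, .p 6 2 0 3 5,
     .p 4 1 0 3 5, .p 6 2 5 0 1, .p 3 0 2 6 1, .p 3 0 1 4 2, .p 3 4 1 0 5, .p 3 0 1 6 2,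
     .q 6 0 1 4 2, .p 3 5 0 1 4, .q 4 1 0 6 2]),
  ([(2, 16), (1, 25), (16, 3)],
    [.r 33, .r 48, .p 3 0 1 5 2, .p 3 0 2 5 1, .p 6 1 0 2 5, .p 5 2 0 1 6, .t 2 15 16,
     .q 5 2 0 3 4, .p 6 1 5 2 0, .q 6 1 0 3 5, .p 5 2 6 1 0, .p 3 0 6 1 5, .q 2 5 3 0 1,
     .p 3 0 1 6 2, .p 2 5 1 6 0, .q 3 5 2 6 1, .p 4 0 2 6 1, .p 3 0 2 6 1, .p 5 2 0 6 1,
     .p 3 5 2 6 0, .p 3 4 0 6 2, .p 6 2 0 3 4, .q 4 3 0 6 1]),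
  ([(6, 25), (25, 36), (5, 36), (26, 3)],
    [.r 49, .p 3 6 0 5 2, .p 3 0 6 2 5, .p 3 6 2 5 0, .p 3 0 5 2 6])]

/-- Refutation certificate, part 7. -/
def cert7 : List (List (ℕ × ℕ) × List Reason) := [
  ([(15, 16), (1, 16), (16, 35), (16, 3)],
    [.r 35, .r 12, .q 2 0 3 5 1, .r 2, .r 1, .q 3 0 2 6 1, .p 5 3 6 1 0, .q 2 6 3 0 1,
     .q 6 1 0 3 5, .p 0 3 6 1 5, .p 3 0 6 1 5, .p 0 2 6 1 5, .r 75, .p 3 5 1 6 2, .q 3 6 2 5 1,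
     .t 1 26 16, .r 0, .p 3 5 2 0 6, .q 5 2 0 6 1, .q 5 2 6 0 1, .p 4 1 0 2 5, .q 6 2 5 0 1,
     .q 6 0 2 4 1, .p 3 5 0 2 6, .q 5 0 2 6 1, .q 4 2 0 6 1, .q 6 2 0 3 4, .p 3 4 2 0 5,
     .p 3 5 0 2 4]),
  ([(25, 6), (1, 26), (16, 5), (16, 25), (1, 25)],
    [.q 5 2 6 0 1, .q 2 5 0 6 1, .q 6 2 5 0 1, .q 0 5 2 6 1]),
  ([(1, 16), (16, 35), (16, 3)],
    [.r 37, .r 52, .r 14, .q 2 0 3 5 1, .r 4, .r 3, .q 3 0 2 6 1, .p 3 0 1 5 2, .p 3 0 2 5 1,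
     .p 5 3 6 1 0, .q 2 6 3 0 1, .r 1, .t 15 16 25, .p 3 0 5 1 6, .p 5 2 6 1 0, .q 3 6 2 0 1,
     .r 0, .p 3 6 0 2 5, .p 3 0 6 2 5, .q 6 0 2 5 1, .q 5 2 0 3 4, .p 3 0 5 2 6, .p 3 4 2 0 6,
     .p 3 6 2 0 5, .q 6 2 0 5 1, .p 3 6 0 2 4, .p 4 1 0 2 6, .q 4 2 0 5 1, .q 5 0 2 4 1]),
  ([(2, 25), (26, 3), (16, 2), (1, 25)],
    [.r 38, .r 53, .p 3 0 1 5 2, .p 3 0 2 5 1, .q 5 2 0 3 6, .q 5 2 0 3 4, .q 5 2 0 6 1,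
     .p 3 0 6 2 5, .q 6 0 2 5 1, .p 3 0 5 2 6, .q 2 0 6 3 5, .p 3 4 2 0 6, .p 3 6 2 0 5,
     .q 6 2 0 5 1, .q 2 5 3 0 6, .p 3 6 0 2 4, .t 1 35 25, .q 4 2 0 5 1, .p 3 5 1 0 2,
     .q 5 0 2 4 1, .p 3 6 2 0 1, .p 4 1 0 2 6]),
  ([(6, 25), (1, 35), (15, 36), (1, 36), (25, 36), (25, 2), (26, 3), (15, 2)],
    [.q 2 6 3 0 1, .p 3 6 0 2 5, .r 4, .q 3 6 2 0 1, .r 79, .q 5 1 0 2 6, .p 3 6 0 1 5]),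
  ([(16, 35), (16, 3)],
    [.r 40, .r 55, .r 17, .q 2 0 3 5 1, .r 7, .p 3 0 1 5 2, .p 3 0 2 5 1, .r 6, .q 3 0 2 6 1,
     .r 2, .t 1 16 25, .p 2 5 0 1 6, .r 1, .q 0 2 5 3 6, .t 35 2 25, .t 1 2 25, .t 1 36 25,
     .t 36 25 15, .t 1 35 25, .r 0, .p 3 5 2 0 6, .t 6 25 15, .q 2 5 0 6 1, .r 3, .r 80, .r 16,
     .p 3 6 2 0 1, .q 0 5 3 6 1, .q 3 5 0 6 2, .p 5 3 6 0 2]),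
  ([(16, 3)],
    [.r 41, .r 18, .q 1 5 3 0 2, .r 0, .t 35 3 16, .t 35 2 16, .q 3 5 1 6 2, .p 6 2 0 3 5, .r 7,
     .p 6 2 5 1 0, .q 0 2 6 1 5, .p 3 0 2 6 1, .p 3 0 1 6 2, .q 6 2 0 1 5, .q 3 5 1 0 2,
     .p 4 2 0 1 5, .t 1 16 35, .q 6 1 0 4 2, .q 6 1 0 3 4, .q 4 0 1 6 2, .p 3 4 0 1 5,
     .p 3 5 1 0 4]),
  ([(16, 25)],
    [.r 0, .r 57, .t 16 3 25]),
  ([(16, 15)],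
    [.r 1, .r 43, .t 15 16 3]),
  ([(36, 3), (2, 36), (3, 1)],
    [.r 0, .r 2, .r 44, .p 4 2 0 3 6, .q 0 3 6 1 5, .q 0 3 6 1 4, .q 1 0 3 4 2, .t 36 2 15,
     .t 36 2 14, .q 4 3 0 1 5, .q 3 4 1 0 2, .q 6 1 5 0 2, .p 1 6 0 3 4, .q 0 5 1 6 3,
     .q 4 3 6 0 2, .q 1 5 0 3 4, .q 6 3 4 0 5, .q 1 4 3 0 5, .p 1 4 0 3 6]),
  ([(2, 36), (26, 1), (25, 6), (25, 2)],
    [.r 3, .r 60, .r 45, .q 3 0 1 6 2, .t 1 3 15, .q 2 6 1 0 3, .p 3 6 2 0 1, .p 1 0 2 6 3, .r 0,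
     .q 6 3 0 5 2, .q 6 3 0 1 5, .p 3 6 1 0 2, .q 1 0 3 6 2, .t 26 3 15, .q 3 0 6 2 5,
     .p 4 0 3 6 2, .p 3 5 1 6 2, .q 0 2 6 1 5, .q 6 0 3 5 1, .p 6 1 5 3 0, .q 6 2 0 1 5,
     .q 6 2 0 1 4, .q 1 0 6 3 5, .p 6 2 0 3 5, .p 4 2 0 1 5, .p 1 4 0 2 5, .q 6 0 1 4 2,
     .t 35 14 2, .p 6 3 5 0 2, .p 1 5 2 0 4, .q 4 1 0 6 2, .q 2 0 5 1 4, .p 6 3 4 0 2,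
     .p 6 3 0 1 4, .q 0 1 4 3 5, .q 3 4 1 0 5, .q 1 4 3 0 2]),
  ([(3, 24), (36, 3), (26, 1)],
    [.r 2, .r 3, .r 46, .r 4, .q 0 3 6 1 5, .q 2 5 1 6 3, .p 4 3 6 1 5, .t 24 3 15, .t 36 24 3,
     .q 1 5 2 4 3, .p 1 6 3 4 2, .q 0 3 4 2 5, .q 4 3 0 1 5, .p 4 3 0 1 6, .t 1 26 34,
     .p 4 2 6 1 0, .p 1 6 2 4 3]),
  ([(26, 1), (25, 6), (25, 2)],
    [.r 3, .r 5, .r 4, .r 47, .r 62, .r 1, .q 6 3 0 2 5, .p 1 6 3 0 2, .q 0 3 6 1 5,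
     .q 0 3 6 1 4, .t 2 3 15, .q 2 5 1 6 3, .q 1 5 2 0 4, .r 0, .p 1 4 2 0 3, .t 24 16 3,
     .q 1 4 0 2 5, .p 0 2 4 1 6, .q 2 4 1 6 3, .q 0 4 1 6 3, .q 6 1 4 0 5, .t 4 16 15,
     .p 0 5 1 4 2, .p 0 4 1 5 2, .p 0 2 4 1 5, .p 0 2 5 1 4]),
  ([(36, 2), (25, 1), (1, 26)],
    [.r 5, .r 63, .r 6, .q 0 1 6 2 5, .q 6 1 0 2 5, .q 6 3 0 2 5, .p 1 6 3 0 2, .q 1 0 2 6 3,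
     .p 1 6 2 0 3, .q 2 0 1 6 3, .q 0 3 6 2 5, .t 1 25 36]),
  ([(36, 3), (35, 36), (25, 36), (5, 36), (1, 26)],
    [.r 7, .q 0 3 6 1 5, .q 0 3 6 2 5, .q 6 3 5 1 0, .q 2 6 3 0 5, .t 1 35 26, .p 1 5 3 6 2]),
  ([(26, 3), (15, 36), (2, 36), (3, 6), (5, 16), (1, 26)],
    [.r 50, .r 8, .q 6 0 3 5 1, .p 4 2 6 0 3, .q 5 3 0 6 2, .q 4 2 6 0 1, .p 6 1 0 3 5,
     .t 24 3 26, .p 6 3 5 1 0, .t 1 35 26, .q 6 0 3 4 2, .p 6 2 0 1 5, .q 0 2 6 3 5,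
     .q 4 3 0 6 2, .p 6 1 5 0 2, .q 6 2 0 3 5, .q 6 2 0 3 4, .p 6 1 0 3 4, .p 6 0 2 4 3,
     .p 3 4 2 0 5, .t 1 34 24, .p 3 5 0 2 4, .q 4 2 0 1 5]),
  ([(4, 5), (35, 2), (5, 26), (5, 36)],
    [.r 66, .p 6 3 5 0 4, .p 6 2 5 0 4, .q 2 5 3 0 4, .q 3 5 2 0 4]),
  ([(5, 24), (35, 4), (15, 4), (24, 34), (24, 1), (24, 26)],
    [.q 6 2 4 0 5, .q 3 4 2 0 5, .p 6 2 4 0 1, .p 6 2 0 4 3, .q 1 0 4 3 5, .q 3 4 0 1 5]),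
  ([(24, 5), (5, 4), (5, 2), (2, 26)],
    [.p 1 4 2 0 5, .p 6 2 4 0 5, .q 6 2 0 4 1]),
  ([(26, 4), (5, 24), (15, 6), (2, 16), (25, 26), (1, 26)],
    [.p 4 0 2 6 1, .t 4 26 25, .q 6 2 4 0 5, .p 4 0 1 6 2, .q 4 2 6 0 1, .q 4 0 6 1 5,
     .q 6 0 4 2 5])]

/-- Refutation certificate, part 8. -/
def cert8 : List (List (ℕ × ℕ) × List Reason) := [
  ([(6, 24), (4, 6), (2, 6), (25, 2)],
    [.q 6 0 2 4 3, .q 6 0 4 2 5, .p 3 4 0 2 5]),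
  ([(35, 4), (15, 4), (24, 34), (24, 26), (4, 6), (5, 24), (35, 2), (2, 16)],
    [.q 6 0 4 3 5, .r 3, .p 6 0 3 4 2, .p 6 1 0 2 4, .q 4 2 0 3 5]),
  ([(2, 34), (24, 26), (24, 6), (4, 6), (5, 24), (35, 3), (15, 1), (3, 26), (3, 6), (2, 16)],
    [.r 57, .p 6 2 0 3 5, .t 34 2 35, .p 6 2 0 3 4, .p 6 0 2 4 3, .q 4 3 0 1 5, .p 3 4 0 1 5,
     .r 0, .p 1 4 0 3 5, .p 6 0 4 3 5, .q 6 0 3 4 1]),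
  ([(14, 3), (34, 14), (5, 4), (3, 36)],
    [.q 6 3 0 4 1, .q 1 4 3 0 5, .p 6 3 4 0 5]),
  ([(35, 3), (25, 1), (25, 6), (25, 2)],
    [.r 16, .r 17, .r 74, .r 59, .r 11, .q 0 1 6 2 5, .q 6 1 0 5 2, .q 1 0 6 2 5, .q 6 0 1 5 2,
     .q 3 0 6 1 5, .r 10, .p 6 1 5 0 3, .p 1 6 3 0 5, .t 36 2 25, .q 6 0 3 5 1, .q 5 3 6 0 2,
     .r 9, .t 36 3 15, .r 8, .t 26 3 15, .p 6 2 5 1 0, .p 6 2 0 1 5, .p 6 1 5 0 2, .q 6 1 0 2 5,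
     .q 0 2 6 1 5, .t 5 26 3, .q 2 0 6 1 5, .t 1 25 26, .p 6 2 0 3 5, .r 7, .r 5, .r 4,
     .q 4 0 6 2 5, .r 3, .q 4 2 6 0 1, .r 1, .q 4 3 0 2 5, .p 6 1 0 3 4, .q 6 1 0 4 3,
     .q 6 0 1 4 3, .p 6 1 4 0 5, .p 3 0 5 1 4, .q 3 4 1 0 5, .p 6 0 4 1 5, .r 0, .t 14 3 25,
     .q 3 0 4 1 5, .q 0 3 4 1 5, .p 6 2 4 0 3, .q 2 5 1 4 3, .t 24 3 15, .q 0 3 4 2 5,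
     .q 1 5 2 4 3]),
  ([(25, 1), (25, 6), (25, 2)],
    [.r 18, .r 60, .r 75, .r 17, .r 12, .q 1 0 6 2 5, .q 0 1 6 2 5, .q 6 1 0 5 2, .q 6 0 1 5 2,
     .p 6 1 5 0 3, .q 3 0 6 1 5, .p 1 6 3 0 5, .q 6 0 3 5 1, .r 11, .t 36 2 25, .q 5 3 6 0 2,
     .r 10, .t 36 3 15, .r 9, .t 26 3 15, .r 0, .p 6 1 5 3 0, .p 6 2 5 3 0, .p 3 5 1 6 2,
     .p 3 5 2 6 1]),
  ([(25, 6), (25, 2)],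
    [.r 76, .r 18, .r 19, .r 61, .r 13, .q 0 1 6 2 5, .r 0, .q 5 2 6 0 1, .p 3 0 1 5 2,
     .p 6 1 0 2 5, .p 4 1 0 2 5, .q 6 2 5 0 1, .q 2 5 1 6 3, .t 2 16 3, .q 1 6 0 2 5,
     .q 6 1 0 2 4, .p 6 2 5 0 3, .q 1 6 2 0 5, .q 5 0 2 6 1, .q 0 3 6 1 5, .q 2 0 3 5 1,
     .p 4 3 0 6 1, .p 1 6 3 0 5, .t 5 16 3, .p 3 5 2 6 1, .q 6 3 0 2 5, .r 9, .q 3 5 2 0 1,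
     .q 2 0 6 3 4, .p 6 1 0 5 2, .q 0 2 6 3 5, .r 7, .q 2 5 3 0 1, .q 6 0 2 4 1, .q 2 5 0 3 4,
     .t 1 35 24, .q 4 2 0 6 1, .p 6 3 0 2 4, .q 0 2 4 3 5, .q 2 4 3 0 5, .q 3 4 2 0 5]),
  ([(25, 2)],
    [.r 77, .r 20, .r 18, .r 0, .t 6 3 25, .p 1 6 0 2 5, .q 3 0 6 1 5, .p 2 0 6 1 5]),
  ([(36, 2)],
    [.r 0, .r 78, .q 5 2 0 3 6]),
  ([(15, 2)],
    [.r 1, .r 21, .p 6 1 5 2 0]),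
  ([(15, 25)],
    [.r 0, .r 80, .p 3 0 2 5 1]),
  ([(16, 5)],
    [.r 1, .r 22, .q 6 1 5 0 2]),
  ([(1, 25)],
    [.r 1, .r 67, .p 3 0 1 5 2]),
  ([(3, 5)],
    [.r 1, .r 68, .p 6 1 5 0 3]),
  ([(36, 5)],
    [.r 0, .r 27, .p 1 6 3 0 5]),
  ([(1, 26)],
    [.r 5, .r 70, .r 0, .r 28, .r 2, .p 6 2 0 1 5, .q 5 1 0 3 4, .q 5 1 0 3 6, .p 6 2 5 1 0,
     .p 4 2 5 1 0, .p 6 1 0 3 4, .t 1 25 36, .t 26 3 15, .t 24 3 15, .q 4 3 0 6 2, .r 35,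
     .q 6 0 3 4 2, .q 1 0 6 2 5, .q 3 0 6 1 5, .q 6 0 1 5 2]),
  ([(1, 3)],
    [.r 0, .r 29, .q 3 0 1 6 2]),
  ([(1, 35)],
    [.r 0, .r 87, .q 1 0 3 5 2]),
  ([(36, 3)],
    [.r 1, .r 9, .r 28]),
  ([(15, 35)],
    [.r 1, .r 9, .q 3 5 1 0 2])]

/-- Refutation certificate, part 9. -/
def cert9 : List (List (ℕ × ℕ) × List Reason) := [
  ([(36, 25)],
    [.r 1, .r 90, .t 36 3 25]),
  ([(2, 35)],
    [.r 1, .r 76, .q 1 5 3 0 2]),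
  ([],
    [.r 1, .r 0, .r 14, .p 6 3 5 2 0])]

/-- The full refutation certificate. -/
def cert : List (List (ℕ × ℕ) × List Reason) :=
  cert1 ++ (cert2 ++ (cert3 ++ (cert4 ++ (cert5 ++ (cert6 ++ (cert7 ++ (cert8 ++ (cert9))))))))

theorem cert_ok : checkProof cert [] = true := by
  decide +kernel

theorem K133_cannot : ¬ CanAvoid K133 {P5_1423, P5_2314} := by
  rintro ⟨L, hL, hA⟩
  have h := checkProof_sound hL hA cert [] (by simp)
  rw [cert_ok] at h
  exact Bool.noConfusion h

theorem orderChrom_eq_top {F : Set EOGraph}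
    (h : ∀ (n : ℕ) (G : SimpleGraph (Fin n)), CanAvoid G F) : orderChrom F = ⊤ := by
  simp [orderChrom, h]

theorem orderChrom_pair : orderChrom {P5_1423, P5_2314} = 3 := by
  apply le_antisymm
  · refine (iInf_le _ 7).trans ((iInf_le _ K133).trans ((iInf_le _ K133_cannot).trans ?_))
    exact_mod_cast K133_colorable.chromaticNumber_le
  · refine le_iInf fun n => le_iInf fun G => le_iInf fun h => ?_
    by_contra hlt
    apply h
    apply canAvoid_bip
    rw [← SimpleGraph.chromaticNumber_le_iff_colorable]
    rw [not_le] at hlt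
    have h3 : (3 : ℕ∞) = ((2 : ℕ) : ℕ∞) + 1 := by norm_num
    rw [h3] at hlt
    exact Order.le_of_lt_add_one hlt

end OrderChromProof

/-- `χ'_<(P_5^{1423}) = χ'_<(P_5^{2314}) = ∞`, but
`χ'_<({P_5^{1423}, P_5^{2314}}) = 3`. -/
theorem orderChrom_P5_1423_P5_2314 :
    orderChrom {P5_1423} = ⊤ ∧ orderChrom {P5_2314} = ⊤ ∧
      orderChrom {P5_1423, P5_2314} = 3 := by
  exact ⟨OrderChromProof.orderChrom_eq_top fun _ => OrderChromProof.canAvoid_1423,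
    OrderChromProof.orderChrom_eq_top fun _ => OrderChromProof.canAvoid_2314,
    OrderChromProof.orderChrom_pair⟩
end

section
/- Let n ≥ 2. The order chromatic number χ'_<(D_n) is finite, but for every edge-ordering D* of the underlying simple graph of D_n that is not isomorphic (as an edge-ordered graph) to D_n, the order chromatic number χ'_<(D*) is infinite. -/
/-- The underlying simple graph of `D_n`: vertices `0,…,n-1` (standing for
`x_1,…,x_n`), the edges being exactly the pairs incident to `x_1 = 0` or to
`x_n = n-1`. -/
def Dunder (n : ℕ) : SimpleGraph (Fin n) :=
  SimpleGraph.fromRel fun a b => (a : ℕ) = 0 ∨ (b : ℕ) = n - 1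

/-- The edge-ordered graph `D_n` with edge-order
`x_1x_2 < x_1x_3 < ⋯ < x_1x_n < x_2x_n < ⋯ < x_{n-1}x_n`. -/
def Dgraph (n : ℕ) : EOGraph where
  nv := n
  graph := Dunder n
  label := symLabel fun a b => if (a : ℕ) = 0 then (b : ℕ) else (n - 1) + (a : ℕ)

/-! ### Ramsey for triples, through an ultrafilter -/

theorem ultra_lim {C : Type*} [Finite C] (f : ℕ → C) :
    ∃ c, ∀ᶠ n in (Filter.hyperfilter ℕ : Filter ℕ), f n = c := by
  by_contra h
  have h : ∀ c, ¬ ∀ᶠ n in (Filter.hyperfilter ℕ : Filter ℕ), f n = c := not_exists.1 h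
  have h2 : ∀ c, ∀ᶠ n in (Filter.hyperfilter ℕ : Filter ℕ), f n ≠ c := fun c =>
    Ultrafilter.eventually_not.2 (h c)
  have h3 := Filter.eventually_all.2 h2
  obtain ⟨n, hn⟩ := h3.exists
  exact hn (f n) rfl

theorem ev_gt (a : ℕ) : ∀ᶠ n in (Filter.hyperfilter ℕ : Filter ℕ), a < n := by
  have : (Filter.hyperfilter ℕ : Filter ℕ) ≤ Filter.atTop := by
    rw [← Nat.cofinite_eq_atTop]; exact Filter.hyperfilter_le_cofinite
  exact this (Filter.eventually_gt_atTop a)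

theorem ramsey_three {C : Type*} [Finite C] (c : ℕ → ℕ → ℕ → C) :
    ∃ c0 : C, ∀ m : ℕ, ∃ x : ℕ → ℕ, (∀ i j, i < j → j < m → x i < x j) ∧
      ∀ i j k, i < j → j < k → k < m → c (x i) (x j) (x k) = c0 := by
  choose c2 h2 using fun i j => ultra_lim (c i j)
  choose c1 h1 using fun i => ultra_lim (c2 i)
  obtain ⟨c0, h0⟩ := ultra_lim c1
  refine ⟨c0, fun m => ?_⟩
  suffices H : ∃ x : ℕ → ℕ, (∀ i j, i < j → j < m → x i < x j) ∧
      (∀ i, i < m → c1 (x i) = c0) ∧ (∀ i j, i < j → j < m → c2 (x i) (x j) = c0) ∧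
      ∀ i j k, i < j → j < k → k < m → c (x i) (x j) (x k) = c0 by
    obtain ⟨x, a, _, _, b⟩ := H
    exact ⟨x, a, b⟩
  induction m with
  | zero => exact ⟨id, by simp⟩
  | succ m ih =>
    obtain ⟨x, hx, hx1, hx2, hx3⟩ := ih
    have e1 : ∀ᶠ y in (Filter.hyperfilter ℕ : Filter ℕ), ∀ i ∈ Finset.range m, x i < y :=
      (Filter.eventually_all_finset _).2 fun i _ => ev_gt _
    have e2 : ∀ᶠ y in (Filter.hyperfilter ℕ : Filter ℕ), ∀ i ∈ Finset.range m,
        c2 (x i) y = c0 := by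
      refine (Filter.eventually_all_finset _).2 fun i hi => ?_
      have := h1 (x i)
      rwa [hx1 i (Finset.mem_range.1 hi)] at this
    have e3 : ∀ᶠ y in (Filter.hyperfilter ℕ : Filter ℕ), ∀ j ∈ Finset.range m,
        ∀ i ∈ Finset.range j, c (x i) (x j) y = c0 := by
      refine (Filter.eventually_all_finset _).2 fun j hj =>
        (Filter.eventually_all_finset _).2 fun i hi => ?_
      have := h2 (x i) (x j)
      rwa [hx2 i j (Finset.mem_range.1 hi) (Finset.mem_range.1 hj)] at this
    obtain ⟨y, ⟨⟨y1, y2⟩, y3⟩, y0⟩ := (((e1.and e2).and e3).and h0).exists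
    simp only [Finset.mem_range] at y1 y2 y3
    refine ⟨fun i => if i < m then x i else y, ?_, ?_, ?_, ?_⟩
    · intro i j hij hj
      have hi : i < m := by omega
      by_cases hjm : j < m
      · simp [hi, hjm, hx i j hij hjm]
      · simp [hi, hjm, y1 i hi]
    · intro i hi
      by_cases him : i < m
      · simp [him, hx1 i him]
      · simp [him, y0]
    · intro i j hij hj
      have hi : i < m := by omega
      by_cases hjm : j < m
      · simp [hi, hjm, hx2 i j hij hjm]
      · simp [hi, hjm, y2 i hi]
    · intro i j k hij hjk hk
      have hi : i < m := by omega
      have hj : j < m := by omega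
      by_cases hkm : k < m
      · simp [hi, hj, hkm, hx3 i j k hij hjk hkm]
      · simp [hi, hj, hkm, y3 j hj i hij]

/-- Finite form, for a sequence of colourings. -/
theorem ramsey_three_fin {C : Type*} [Finite C] (c : ℕ → ℕ → ℕ → ℕ → C) (m : ℕ) :
    ∃ (N : ℕ) (c0 : C) (x : ℕ → ℕ), (∀ i j, i < j → j < m → x i < x j) ∧
      (∀ i < m, x i < N) ∧
      ∀ i j k, i < j → j < k → k < m → c N (x i) (x j) (x k) = c0 := by
  choose d hd using fun i j k => ultra_lim (fun N => c N i j k)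
  obtain ⟨c0, h⟩ := ramsey_three d
  obtain ⟨x, hx, hx3⟩ := h m
  have e1 : ∀ᶠ N in (Filter.hyperfilter ℕ : Filter ℕ), ∀ i ∈ Finset.range m, x i < N :=
    (Filter.eventually_all_finset _).2 fun i _ => ev_gt _
  have e3 : ∀ᶠ N in (Filter.hyperfilter ℕ : Filter ℕ), ∀ k ∈ Finset.range m,
      ∀ j ∈ Finset.range k, ∀ i ∈ Finset.range j, c N (x i) (x j) (x k) = c0 := by
    refine (Filter.eventually_all_finset _).2 fun k hk =>
      (Filter.eventually_all_finset _).2 fun j hj =>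
      (Filter.eventually_all_finset _).2 fun i hi => ?_
    have := hd (x i) (x j) (x k)
    rwa [hx3 i j k (Finset.mem_range.1 hi) (Finset.mem_range.1 hj) (Finset.mem_range.1 hk)] at this
  obtain ⟨N, a, b⟩ := (e1.and e3).exists
  simp only [Finset.mem_range] at a b
  exact ⟨N, c0, x, hx, a, fun i j k hij hjk hk => b k hk j hjk i hij⟩

/-! ### The order of `D_n` -/

theorem Dunder_adj {n : ℕ} (a b : Fin n) : (Dunder n).Adj a b ↔
    a ≠ b ∧ ((a : ℕ) = 0 ∨ (b : ℕ) = 0 ∨ (a : ℕ) = n - 1 ∨ (b : ℕ) = n - 1) := by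
  simp only [Dunder, SimpleGraph.fromRel_adj]
  tauto

/-- The label of `D_n`, with a plain type. -/
def Dl (n : ℕ) : Sym2 (Fin n) → ℕ := (Dgraph n).label

theorem Dlabel_lt {n : ℕ} (a b : Fin n) (h : a < b) : Dl n s(a, b) =
    if (a : ℕ) = 0 then (b : ℕ) else (n - 1) + (a : ℕ) := by
  have : Dl n s(a, b) = if ((min a b : Fin n) : ℕ) = 0 then ((max a b : Fin n) : ℕ)
    else (n - 1) + ((min a b : Fin n) : ℕ) := rfl
  rw [this, min_eq_left h.le, max_eq_right h.le]

theorem core {n : ℕ} (hn : 2 ≤ n) (M : Fin n → Fin n → ℕ) (hs : ∀ a b, M a b = M b a)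
    (z w : Fin n) (hz : (z : ℕ) = 0) (hw : (w : ℕ) = n - 1)
    (h1 : ∀ i j, z < i → i < j → M z i < M z j)
    (h2 : ∀ i, z < i → i < w → M z w < M i w)
    (h3 : ∀ i j, z < i → i < j → j < w → M i w < M j w)
    (a b c d : Fin n) (hab : (Dunder n).Adj a b) (hcd : (Dunder n).Adj c d) :
    Dl n s(a, b) < Dl n s(c, d) ↔ M a b < M c d := by
  wlog hlt : a < b generalizing a b
  · have hne := hab.ne
    rw [Sym2.eq_swap, hs a b]
    exact this b a hab.symm (lt_of_le_of_ne (not_lt.1 hlt) hne.symm)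
  wlog hlt' : c < d generalizing c d
  · have hne := hcd.ne
    rw [Sym2.eq_swap (a := c), hs c d]
    exact this d c hcd.symm (lt_of_le_of_ne (not_lt.1 hlt') hne.symm)
  have key : ∀ a b c d : Fin n, (Dunder n).Adj a b → (Dunder n).Adj c d → a < b → c < d →
      ((Dl n s(a, b) < Dl n s(c, d) → M a b < M c d) ∧
      (Dl n s(a, b) = Dl n s(c, d) → M a b = M c d)) := by
    clear hlt hlt' hab hcd a b c d
    intro a b c d hab hcd hlt hlt'
    rw [Dlabel_lt a b hlt, Dlabel_lt c d hlt']
    rw [Dunder_adj] at hab hcd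
    have ha := a.2
    have hb := b.2
    have hc := c.2
    have hd := d.2
    rw [Fin.lt_def] at hlt hlt'
    have hzz : ∀ e : Fin n, (e : ℕ) = 0 → e = z := fun e he => Fin.ext (by omega)
    have hww : ∀ e : Fin n, (e : ℕ) = n - 1 → e = w := fun e he => Fin.ext (by omega)
    by_cases a0 : (a : ℕ) = 0 <;> by_cases c0 : (c : ℕ) = 0 <;> simp only [a0, c0, if_true, if_false]
    · rw [hzz a a0, hzz c c0]
      refine ⟨fun h => h1 b d ?_ h, fun h => ?_⟩
      · rw [Fin.lt_def]; omega
      · rw [Fin.ext h]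
    · rw [hzz a a0, hww d (by omega)]
      refine ⟨fun h => ?_, fun h => by omega⟩
      have h4 := h2 c (by rw [Fin.lt_def]; omega) (by rw [Fin.lt_def]; omega)
      rcases eq_or_ne b w with rfl | hbw
      · exact h4
      · have : (b : ℕ) ≠ w := fun h => hbw (Fin.ext h)
        exact (h1 b w (by rw [Fin.lt_def]; omega) (by rw [Fin.lt_def]; omega)).trans h4
    · exact ⟨fun h => by omega, fun h => by omega⟩
    · rw [hww b (by omega), hww d (by omega)]
      refine ⟨fun h => h3 a c (by rw [Fin.lt_def]; omega) (by rw [Fin.lt_def]; omega)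
        (by rw [Fin.lt_def]; omega), fun h => ?_⟩
      rw [show a = c from Fin.ext (by omega)]
  have k1 := key a b c d hab hcd hlt hlt'
  have k2 := key c d a b hcd hab hlt' hlt
  constructor
  · exact k1.1
  · intro h
    by_contra hh
    rcases (not_lt.1 hh).lt_or_eq with h' | h'
    · exact absurd (k2.1 h') (by omega)
    · exact absurd (k2.2 h') (by omega)

/-! ### Finiteness -/

theorem contains_of_perm {n N : ℕ} (hn : 2 ≤ n) (L : Sym2 (Fin N) → ℕ) (h : Fin n → Fin N)
    (hinj : Function.Injective h)
    (z w : Fin n) (hz : (z : ℕ) = 0) (hw : (w : ℕ) = n - 1)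
    (h1 : ∀ i j, z < i → i < j → L s(h z, h i) < L s(h z, h j))
    (h2 : ∀ i, z < i → i < w → L s(h z, h w) < L s(h i, h w))
    (h3 : ∀ i j, z < i → i < j → j < w → L s(h i, h w) < L s(h j, h w)) :
    (EOGraph.mk N ⊤ L).Contains (Dgraph n) := by
  refine ⟨⟨h, hinj⟩, fun a b hab => ?_, fun a b c d hab hcd => ?_⟩
  · exact hinj.ne hab.ne
  · exact core hn (fun a b => L s(h a, h b)) (fun a b => by rw [Sym2.eq_swap]) z w hz hw
      h1 h2 h3 a b c d hab hcd

theorem D_in_homog {n N : ℕ} (hn : 2 ≤ n) (L : Sym2 (Fin N) → ℕ)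
    (hL : (EOGraph.mk N ⊤ L).Valid) (y : ℕ → Fin N)
    (hy : ∀ i j, i < j → j < n → y i ≠ y j) (p q r : Prop)
    (hp : ∀ i j k, i < j → j < k → k < n → (L s(y i, y j) < L s(y i, y k) ↔ p))
    (hq : ∀ i j k, i < j → j < k → k < n → (L s(y i, y k) < L s(y j, y k) ↔ q))
    (hr : ∀ i j k, i < j → j < k → k < n → (L s(y i, y j) < L s(y j, y k) ↔ r)) :
    (EOGraph.mk N ⊤ L).Contains (Dgraph n) := by
  -- symmetric label on indices
  obtain ⟨l, hl⟩ : ∃ l : ℕ → ℕ → ℕ, ∀ i j, l i j = L s(y i, y j) := ⟨_, fun _ _ => rfl⟩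
  have ls : ∀ i j, l i j = l j i := fun i j => by rw [hl, hl, Sym2.eq_swap]
  have hyne : ∀ i j, i ≠ j → i < n → j < n → y i ≠ y j := by
    intro i j hij hi hj
    rcases Nat.lt_or_gt_of_ne hij with h | h
    · exact hy i j h hj
    · exact (hy j i h hi).symm
  have hne : ∀ i j k, i ≠ j → j ≠ k → i ≠ k → i < n → j < n → k < n → l i j ≠ l i k := by
    intro i j k hij hjk hik hi hj hk h
    rw [hl, hl] at h
    have := hL s(y i, y j) (by simpa using hyne i j hij hi hj) s(y i, y k)
      (by simpa using hyne i k hik hi hk) h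
    rw [Sym2.congr_right] at this
    exact hyne j k hjk hj hk this
  simp only [← hl] at hp hq hr
  have fin : ∀ π : ℕ → ℕ, (∀ i < n, π i < n) → (∀ i j, i < j → j < n → π i ≠ π j) →
      (∀ i j, 0 < i → i < j → j < n → l (π 0) (π i) < l (π 0) (π j)) →
      (∀ i, 0 < i → i < n - 1 → l (π 0) (π (n-1)) < l (π i) (π (n-1))) →
      (∀ i j, 0 < i → i < j → j < n - 1 → l (π i) (π (n-1)) < l (π j) (π (n-1))) →
      (EOGraph.mk N ⊤ L).Contains (Dgraph n) := by
    intro π b0 b1 b2 b3 b4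
    refine contains_of_perm hn L (fun i => y (π i)) ?_ ⟨0, by omega⟩ ⟨n-1, by omega⟩ rfl rfl ?_ ?_ ?_
    · intro i j hij
      by_contra hne
      have hne' : (i : ℕ) ≠ j := fun h => hne (Fin.ext h)
      refine hyne (π i) (π j) ?_ (b0 i i.2) (b0 j j.2) hij
      rcases Nat.lt_or_gt_of_ne hne' with h | h
      · exact b1 i j h j.2
      · exact (b1 j i h i.2).symm
    · intro i j hi hj
      simp only [← hl]
      exact b2 i j hi hj j.2
    · intro i hi hj
      simp only [← hl]
      exact b3 i hi hj
    · intro i j hi hij hj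
      simp only [← hl]
      exact b4 i j hi hij hj
  have np : ¬ p → ∀ i j k, i < j → j < k → k < n → l i k < l i j := by
    intro h i j k a b c
    have := hne i j k (by omega) (by omega) (by omega) (by omega) (by omega) (by omega)
    have := (hp i j k a b c).not.2 h
    omega
  have nq : ¬ q → ∀ i j k, i < j → j < k → k < n → l j k < l i k := by
    intro h i j k a b c
    have := hne k i j (by omega) (by omega) (by omega) (by omega) (by omega) (by omega)
    rw [ls k i, ls k j] at this
    have := (hq i j k a b c).not.2 h
    omega
  have nr : ¬ r → ∀ i j k, i < j → j < k → k < n → l j k < l i j := by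
    intro h i j k a b c
    have := hne j i k (by omega) (by omega) (by omega) (by omega) (by omega) (by omega)
    rw [ls j i] at this
    have := (hr i j k a b c).not.2 h
    omega
  have pp : p → ∀ i j k, i < j → j < k → k < n → l i j < l i k := fun h i j k a b c =>
    (hp i j k a b c).2 h
  have pq : q → ∀ i j k, i < j → j < k → k < n → l i k < l j k := fun h i j k a b c =>
    (hq i j k a b c).2 h
  have pr : r → ∀ i j k, i < j → j < k → k < n → l i j < l j k := fun h i j k a b c =>
    (hr i j k a b c).2 h
  clear hp hq hr hne hyne hl
  by_cases P : p <;> by_cases Q : q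
  · replace pp := pp P
    replace pq := pq Q
    refine fin (fun i => i) (fun i h => h) (fun i j h _ => h.ne) ?_ ?_ ?_
    · intro i j a b c; exact pp _ _ _ a b c
    · intro i a b; exact pq _ _ _ a b (by omega)
    · intro i j a b c; exact pq _ _ _ b c (by omega)
  · by_cases R : r
    · -- ij < jk < ik
      replace pp := pp P
      replace nq := nq Q
      replace pr := pr R
      refine fin (fun i => if i = n - 1 then n - 1 else n - 2 - i) ?_ ?_ ?_ ?_ ?_
      · intro i h
        try dsimp only
        split_ifs <;> omega
      · intro i j h h'
        try dsimp only
        split_ifs <;> omega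
      · intro i j a b c
        simp only [show (0:ℕ) ≠ n - 1 by omega, show i ≠ n - 1 by omega, if_false, Nat.sub_zero]
        split_ifs
        · rw [ls]; exact pr _ _ _ (by omega) (by omega) (by omega)
        · rw [ls, ls (n-2)]; 
          have e1 := nq (n-2-j) (n-2-i) (n-2) (by omega) (by omega) (by omega)
          exact e1
      · intro i a b
        simp only [show (0:ℕ) ≠ n - 1 by omega, show i ≠ n - 1 by omega, if_false, Nat.sub_zero, if_true]
        exact nq _ _ _ (by omega) (by omega) (by omega)
      · intro i j a b c
        simp only [show j ≠ n - 1 by omega, show i ≠ n - 1 by omega, if_false, if_true]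
        exact nq _ _ _ (by omega) (by omega) (by omega)
    · -- jk < ij < ik
      replace pp := pp P
      replace nr := nr R
      refine fin (fun i => if i = n - 1 then 0 else i + 1) ?_ ?_ ?_ ?_ ?_
      · intro i h
        try dsimp only
        split_ifs <;> omega
      · intro i j h h'
        try dsimp only
        split_ifs <;> omega
      · intro i j a b c
        simp only [show (0:ℕ) ≠ n - 1 by omega, show i ≠ n - 1 by omega, if_false]
        split_ifs
        · rw [ls _ 0]; exact nr _ _ _ (by omega) (by omega) (by omega)
        · exact pp _ _ _ (by omega) (by omega) (by omega)
      · intro i a b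
        simp only [show (0:ℕ) ≠ n - 1 by omega, show i ≠ n - 1 by omega, if_false, if_true]
        rw [ls _ 0, ls _ 0]
        exact pp _ _ _ (by omega) (by omega) (by omega)
      · intro i j a b c
        simp only [show j ≠ n - 1 by omega, show i ≠ n - 1 by omega, if_false, if_true]
        rw [ls _ 0, ls _ 0]
        exact pp _ _ _ (by omega) (by omega) (by omega)
  · by_cases R : r
    · -- ik < ij < jk
      replace np := np P
      replace pr := pr R
      refine fin (fun i => if i = 0 then 0 else n - i) ?_ ?_ ?_ ?_ ?_
      · intro i h
        try dsimp only
        split_ifs <;> omega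
      · intro i j h h'
        try dsimp only
        split_ifs <;> omega
      · intro i j a b c
        simp only [show i ≠ 0 by omega, show j ≠ 0 by omega, if_false, if_true]
        exact np _ _ _ (by omega) (by omega) (by omega)
      · intro i a b
        simp only [show i ≠ 0 by omega, show n - 1 ≠ 0 by omega, if_false, if_true]
        rw [ls (n - i)]
        exact pr _ _ _ (by omega) (by omega) (by omega)
      · intro i j a b c
        simp only [show i ≠ 0 by omega, show j ≠ 0 by omega, show n - 1 ≠ 0 by omega, if_false]
        rw [ls (n - i), ls (n - j)]
        exact np _ _ _ (by omega) (by omega) (by omega)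
    · -- ik < jk < ij
      replace np := np P
      replace pq := pq Q
      replace nr := nr R
      refine fin (fun i => if i = 0 then n - 1 else i - 1) ?_ ?_ ?_ ?_ ?_
      · intro i h
        try dsimp only
        split_ifs <;> omega
      · intro i j h h'
        try dsimp only
        split_ifs <;> omega
      · intro i j a b c
        simp only [show i ≠ 0 by omega, show j ≠ 0 by omega, if_false, if_true]
        rw [ls _ (i-1), ls _ (j-1)]
        exact pq _ _ _ (by omega) (by omega) (by omega)
      · intro i a b
        simp only [show i ≠ 0 by omega, show n - 1 ≠ 0 by omega, if_false, if_true]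
        rw [ls (n - 1)]
        exact nr _ _ _ (by omega) (by omega) (by omega)
      · intro i j a b c
        simp only [show i ≠ 0 by omega, show j ≠ 0 by omega, show n - 1 ≠ 0 by omega, if_false]
        exact pq _ _ _ (by omega) (by omega) (by omega)
  · replace np := np P
    replace nq := nq Q
    refine fin (fun i => n - 1 - i) (fun i h => by omega) (fun i j h _ => by omega) ?_ ?_ ?_
    · intro i j a b c
      rw [ls _ (n-1-i), ls _ (n-1-j)]
      exact nq _ _ _ (by omega) (by omega) (by omega)
    · intro i a b
      rw [ls _ (n-1-(n-1)), ls _ (n-1-(n-1))]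
      exact np _ _ _ (by omega) (by omega) (by omega)
    · intro i j a b c
      rw [ls _ (n-1-(n-1)), ls _ (n-1-(n-1))]
      exact np _ _ _ (by omega) (by omega) (by omega)

theorem exists_cannot_avoid (n : ℕ) (hn : 2 ≤ n) :
    ∃ N : ℕ, ¬ CanAvoid (⊤ : SimpleGraph (Fin N)) {Dgraph n} := by
  by_contra hcon
  push Not at hcon
  choose L hV hA using hcon
  let lab : ℕ → ℕ → ℕ → ℕ := fun N i j =>
    if h : i < N ∧ j < N then L N s(⟨i, h.1⟩, ⟨j, h.2⟩) else 0
  obtain ⟨N, c0, x, hx, hN, hc⟩ := ramsey_three_fin (C := Bool × Bool × Bool) (fun N i j k =>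
    (decide (lab N i j < lab N i k), decide (lab N i k < lab N j k),
      decide (lab N i j < lab N j k))) n
  have hN0 : 0 < N := lt_of_le_of_lt (Nat.zero_le _) (hN 0 (by omega))
  let y : ℕ → Fin N := fun i => if h : x i < N then ⟨x i, h⟩ else ⟨0, hN0⟩
  have hyv : ∀ i < n, ∃ h, y i = ⟨x i, h⟩ := fun i hi => ⟨hN i hi, by simp [y, hN i hi]⟩
  have hlab : ∀ i j, i < n → j < n → lab N (x i) (x j) = L N s(y i, y j) := by
    intro i j hi hj
    simp [lab, y, hN i hi, hN j hj]
  refine hA N (Dgraph n) rfl (D_in_homog hn (L N) (hV N) y ?_ (c0.1 = true) (c0.2.1 = true)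
    (c0.2.2 = true) ?_ ?_ ?_)
  · intro i j hij hj h
    obtain ⟨_, e1⟩ := hyv i (by omega)
    obtain ⟨_, e2⟩ := hyv j (by omega)
    rw [e1, e2] at h
    have := hx i j hij hj
    simp only [Fin.mk.injEq] at h
    omega
  all_goals
    intro i j k hij hjk hk
    rw [← hc i j k hij hjk hk, ← hlab _ _ (by omega) (by omega), ← hlab _ _ (by omega) (by omega)]
    simp

/-! ### Uniqueness -/

theorem iso_of_order {n : ℕ} (hn : 2 ≤ n) (L : Sym2 (Fin n) → ℕ) (P Q : Fin n) (hPQ : P ≠ Q)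
    (hadj : ∀ a b, (Dunder n).Adj a b ↔ a ≠ b ∧ (a = P ∨ b = P ∨ a = Q ∨ b = Q))
    (hinj : ∀ u v, u ≠ P → v ≠ P → L s(P, u) = L s(P, v) → u = v)
    (h1 : ∀ u, u ≠ P → u ≠ Q → L s(P, u) < L s(P, Q) ∧ L s(P, Q) < L s(Q, u))
    (h2 : ∀ u v, u ≠ P → u ≠ Q → v ≠ P → v ≠ Q → L s(P, u) < L s(P, v) → L s(Q, u) < L s(Q, v)) :
    EOGraph.Iso (EOGraph.mk n (Dunder n) L) (Dgraph n) := by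
  let key : Fin n → ℕ := fun v => if v = P then 0 else L s(P, v) + 1
  have kinj : Function.Injective key := by
    intro u v huv
    simp only [key] at huv
    split_ifs at huv with a b b
    · rw [a, b]
    · exact hinj u v a b (by omega)
  let σ := Tuple.sort key
  have hmono : StrictMono (key ∘ σ) :=
    (Tuple.monotone_sort key).strictMono_of_injective (kinj.comp σ.injective)
  have hlt : ∀ a b, a < b ↔ key (σ a) < key (σ b) := fun a b => hmono.lt_iff_lt.symm
  have hle : ∀ a b, a ≤ b ↔ key (σ a) ≤ key (σ b) := fun a b => hmono.le_iff_le.symm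
  have kP : key P = 0 := by simp [key]
  have kn : ∀ u, u ≠ P → key u = L s(P, u) + 1 := fun u hu => by simp [key, hu]
  obtain ⟨z, hz⟩ : ∃ z : Fin n, (z : ℕ) = 0 := ⟨⟨0, by omega⟩, rfl⟩
  obtain ⟨w, hw⟩ : ∃ w : Fin n, (w : ℕ) = n - 1 := ⟨⟨n - 1, by omega⟩, rfl⟩
  have sz : σ z = P := by
    have h : z ≤ σ.symm P := by rw [Fin.le_def]; omega
    rw [hle, Equiv.apply_symm_apply, kP] at h
    exact kinj (by omega)
  have sw : σ w = Q := by
    have h : σ.symm Q ≤ w := by rw [Fin.le_def]; have := (σ.symm Q).2; omega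
    rw [hle, Equiv.apply_symm_apply] at h
    by_contra hne
    by_cases hP : σ w = P
    · rw [hP, kP, kn Q hPQ.symm] at h; omega
    · rw [kn _ hP, kn Q hPQ.symm] at h
      have := (h1 _ hP hne).1
      omega
  have nz : ∀ i, z < i → σ i ≠ P := fun i hi h => by
    rw [← sz] at h; exact hi.ne' (σ.injective h)
  have nw : ∀ i, i < w → σ i ≠ Q := fun i hi h => by
    rw [← sw] at h; exact hi.ne (σ.injective h)
  have adjz : ∀ a b, (Dunder n).Adj a b ↔ (Dunder n).Adj (σ a) (σ b) := by
    intro a b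
    rw [hadj (σ a), Dunder_adj a b, ← sz, ← sw]
    simp only [ne_eq, EmbeddingLike.apply_eq_iff_eq]
    simp only [Fin.ext_iff, hz, hw]
  have C := core hn (fun a b => L s(σ a, σ b)) (fun a b => by rw [Sym2.eq_swap]) z w hz hw ?_ ?_ ?_
  · refine ⟨σ.symm, fun a b => ?_, fun a b c d hab hcd => ?_⟩
    · have := adjz (σ.symm a) (σ.symm b)
      simp only [Equiv.apply_symm_apply] at this
      exact this.symm
    · have e1 := adjz (σ.symm a) (σ.symm b)
      have e2 := adjz (σ.symm c) (σ.symm d)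
      have := C (σ.symm a) (σ.symm b) (σ.symm c) (σ.symm d)
      simp only [Equiv.apply_symm_apply] at this e1 e2
      exact (this (e1.2 hab) (e2.2 hcd)).symm
  · intro i j hi hij
    have := (hlt i j).1 hij
    rw [kn _ (nz i hi), kn _ (nz j (hi.trans hij))] at this
    simp only [sz]
    omega
  · intro i hi hij
    have := (h1 _ (nz i hi) (nw i hij)).2
    simp only [sz, sw]
    rwa [Sym2.eq_swap (a := σ i)]
  · intro i j hi hij hj
    have := (hlt i j).1 hij
    rw [kn _ (nz i hi), kn _ (nz j (hi.trans hij))] at this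
    have := h2 _ _ (nz i hi) (nw i (hij.trans hj)) (nz j (hi.trans hij)) (nw j hj) (by omega)
    simp only [sw]
    rwa [Sym2.eq_swap (a := σ i), Sym2.eq_swap (a := σ j)]

theorem lex_iff (K a b c d : ℕ) (hb : b < K) (hd : d < K) :
    a * K + b < c * K + d ↔ a < c ∨ (a = c ∧ b < d) := by
  constructor
  · intro h
    rcases lt_trichotomy a c with h1 | h1 | h1
    · exact Or.inl h1
    · subst h1; exact Or.inr ⟨rfl, by omega⟩
    · exfalso
      have : (c + 1) * K ≤ a * K := Nat.mul_le_mul_right K h1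
      rw [Nat.add_mul] at this
      omega
  · rintro (h | ⟨rfl, h⟩)
    · have : (a + 1) * K ≤ c * K := Nat.mul_le_mul_right K h
      rw [Nat.add_mul] at this
      omega
    · omega

theorem lex_eq (K a b c d : ℕ) (hb : b < K) (hd : d < K) (h : a * K + b = c * K + d) :
    a = c ∧ b = d := by
  have h1 := (lex_iff K a b c d hb hd).not.1 (by omega)
  have h2 := (lex_iff K c d a b hd hb).not.1 (by omega)
  omega

/-- Embedding into the order of pairs given by `F (min, max)`, `S (min, max)` lexicographically. -/
theorem canonical {n N : ℕ} (G : SimpleGraph (Fin N)) (H : SimpleGraph (Fin n))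
    (L : Sym2 (Fin n) → ℕ)
    (hG : ¬ CanAvoid G {EOGraph.mk n H L}) (F S : ℕ → ℕ → ℕ)
    (hS : ∀ i j, i < N → j < N → S i j < N + 1)
    (hinj : ∀ i j i' j', i < N → j < N → i' < N → j' < N → F i j = F i' j' → S i j = S i' j' →
      i = i' ∧ j = j') :
    ∃ g : Fin n → ℕ, Function.Injective g ∧ (∀ i, g i < N) ∧ ∀ a b c d, H.Adj a b → H.Adj c d →
      (L s(a, b) < L s(c, d) ↔
        F (min (g a) (g b)) (max (g a) (g b)) < F (min (g c) (g d)) (max (g c) (g d)) ∨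
        (F (min (g a) (g b)) (max (g a) (g b)) = F (min (g c) (g d)) (max (g c) (g d)) ∧
        S (min (g a) (g b)) (max (g a) (g b)) < S (min (g c) (g d)) (max (g c) (g d)))) := by
  have hval : ∀ a b : Fin N, symLabel (fun i j : Fin N => F i j * (N + 1) + S i j) s(a, b) =
      F (min (a : ℕ) b) (max (a : ℕ) b) * (N + 1) + S (min (a : ℕ) b) (max (a : ℕ) b) := by
    intro a b
    have h1 : ((min a b : Fin N) : ℕ) = min (a : ℕ) b := Fin.coe_min a b
    have h2 : ((max a b : Fin N) : ℕ) = max (a : ℕ) b := Fin.coe_max a b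
    rw [← h1, ← h2]
    rfl
  have hc : (EOGraph.mk N G (symLabel (fun i j : Fin N => F i j * (N + 1) + S i j))).Contains
      (EOGraph.mk n H L) := by
    by_contra hnot
    apply hG
    refine ⟨symLabel (fun i j : Fin N => F i j * (N + 1) + S i j), ?_, fun H' hH' => ?_⟩
    rotate_left
    · rw [Set.mem_singleton_iff.1 hH']
      exact hnot
    · intro e _ f _ hef
      induction e using Sym2.ind with | _ a b
      induction f using Sym2.ind with | _ c d
      dsimp only at hef
      rw [hval, hval] at hef
      have ha : (a : ℕ) < N := a.2
      have hb : (b : ℕ) < N := b.2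
      have hc : (c : ℕ) < N := c.2
      have hd : (d : ℕ) < N := d.2
      obtain ⟨h1, h2⟩ := lex_eq _ _ _ _ _ (hS _ _ (by omega) (by omega))
        (hS _ _ (by omega) (by omega)) hef
      have h3 := hinj _ _ _ _ (by omega) (by omega) (by omega) (by omega) h1 h2
      rw [Sym2.eq_iff]
      simp only [Fin.ext_iff]
      omega
  obtain ⟨f, _, hf⟩ := hc
  refine ⟨fun i => f i, fun i j h => f.injective (Fin.ext h), fun i => (f i).2, ?_⟩
  intro a b c d hab hcd
  have := hf a b c d hab hcd
  dsimp only at this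
  rw [this]
  have e1 := (hval (f a) (f b))
  have e2 := (hval (f c) (f d))
  rw [e1, e2]
  have ha := (f a).2
  have hb := (f b).2
  have hc := (f c).2
  have hd := (f d).2
  exact lex_iff _ _ _ _ _ (hS _ _ (by dsimp only at *; omega) (by dsimp only at *; omega))
    (hS _ _ (by dsimp only at *; omega) (by dsimp only at *; omega))

theorem min_fact {n : ℕ} (H : SimpleGraph (Fin n)) (L : Sym2 (Fin n) → ℕ) (P Q : Fin n)
    (hPQ : P ≠ Q) (hP : ∀ u, u ≠ P → H.Adj P u) (hQ : ∀ u, u ≠ Q → H.Adj Q u)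
    (g : Fin n → ℕ) (ginj : Function.Injective g)
    (hg : ∀ a b c d, H.Adj a b → H.Adj c d → (L s(a, b) < L s(c, d) ↔
      min (g a) (g b) < min (g c) (g d) ∨
      (min (g a) (g b) = min (g c) (g d) ∧ max (g a) (g b) < max (g c) (g d)))) :
    (∀ u, u ≠ P → u ≠ Q → L s(P, u) < L s(Q, u)) ∨
    (∀ u, u ≠ P → u ≠ Q → L s(Q, u) < L s(P, u)) := by
  have h0 := ginj.ne hPQ
  rcases Nat.lt_or_gt_of_ne h0 with h | h
  · left
    intro u h1 h2
    rw [hg _ _ _ _ (hP u h1) (hQ u h2)]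
    have := ginj.ne h1
    have := ginj.ne h2
    omega
  · right
    intro u h1 h2
    rw [hg _ _ _ _ (hQ u h2) (hP u h1)]
    have := ginj.ne h1
    have := ginj.ne h2
    omega

theorem invmin_fact {n N : ℕ} (H : SimpleGraph (Fin n)) (L : Sym2 (Fin n) → ℕ) (P Q : Fin n)
    (hPQ : P ≠ Q) (hP : ∀ u, u ≠ P → H.Adj P u) (hQ : ∀ u, u ≠ Q → H.Adj Q u)
    (g : Fin n → ℕ) (ginj : Function.Injective g) (gN : ∀ i, g i < N)
    (hg : ∀ a b c d, H.Adj a b → H.Adj c d → (L s(a, b) < L s(c, d) ↔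
      min (g a) (g b) < min (g c) (g d) ∨
      (min (g a) (g b) = min (g c) (g d) ∧ N - max (g a) (g b) < N - max (g c) (g d))))
    (hA : ∀ u, u ≠ P → u ≠ Q → L s(P, u) < L s(Q, u)) :
    ((∀ u v, u ≠ P → u ≠ Q → v ≠ P → v ≠ Q → L s(P, u) < L s(Q, v)) ∧
      (∀ u, u ≠ P → u ≠ Q → L s(P, Q) < L s(Q, u)) ∧
      (∀ u v, u ≠ P → u ≠ Q → v ≠ P → v ≠ Q → L s(P, u) < L s(P, Q) → L s(P, v) < L s(P, Q) →
        L s(P, u) < L s(P, v) → L s(Q, u) < L s(Q, v))) ∨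
    ((∀ u, u ≠ P → u ≠ Q → L s(Q, u) < L s(P, Q)) ∧
      (∀ u v, u ≠ P → u ≠ Q → v ≠ P → v ≠ Q → u ≠ v →
        L s(Q, u) < L s(P, v) ∨ L s(Q, v) < L s(P, u))) := by
  have h0 := ginj.ne hPQ
  have hPQ' := hP Q hPQ.symm
  have B : ∀ u, u ≠ P → u ≠ Q → g u ≠ g P ∧ g u ≠ g Q ∧
      ((g P < g Q ∧ g P < g u) ∨ (g Q < g P ∧ g u < g Q)) := by
    intro u h1 h2
    have := hA u h1 h2
    rw [hg _ _ _ _ (hP u h1) (hQ u h2)] at this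
    have := ginj.ne h1
    have := ginj.ne h2
    have := gN u
    have := gN P
    have := gN Q
    omega
  have gP := gN P
  have gQ := gN Q
  rcases Nat.lt_or_gt_of_ne h0 with h | h
  · left
    refine ⟨?_, ?_, ?_⟩
    · intro u v u1 u2 v1 v2
      rw [hg _ _ _ _ (hP u u1) (hQ v v2)]
      have := B u u1 u2
      have := B v v1 v2
      omega
    · intro u u1 u2
      rw [hg _ _ _ _ hPQ' (hQ u u2)]
      have := B u u1 u2
      omega
    · intro u v u1 u2 v1 v2
      rw [hg _ _ _ _ (hP u u1) hPQ', hg _ _ _ _ (hP v v1) hPQ',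
        hg _ _ _ _ (hP u u1) (hP v v1), hg _ _ _ _ (hQ u u2) (hQ v v2)]
      have := B u u1 u2
      have := B v v1 v2
      have := gN u
      have := gN v
      omega
  · right
    refine ⟨?_, ?_⟩
    · intro u u1 u2
      rw [hg _ _ _ _ (hQ u u2) hPQ']
      have := B u u1 u2
      omega
    · intro u v u1 u2 v1 v2 huv
      rw [hg _ _ _ _ (hQ u u2) (hP v v1), hg _ _ _ _ (hQ v v2) (hP u u1)]
      have := B u u1 u2
      have := B v v1 v2
      have := ginj.ne huv
      omega

theorem invmax_fact {n N : ℕ} (H : SimpleGraph (Fin n)) (L : Sym2 (Fin n) → ℕ) (P Q : Fin n)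
    (hPQ : P ≠ Q) (hP : ∀ u, u ≠ P → H.Adj P u) (hQ : ∀ u, u ≠ Q → H.Adj Q u)
    (g : Fin n → ℕ) (ginj : Function.Injective g) (gN : ∀ i, g i < N)
    (hg : ∀ a b c d, H.Adj a b → H.Adj c d → (L s(a, b) < L s(c, d) ↔
      max (g a) (g b) < max (g c) (g d) ∨
      (max (g a) (g b) = max (g c) (g d) ∧ N - min (g a) (g b) < N - min (g c) (g d))))
    (hA : ∀ u, u ≠ P → u ≠ Q → L s(P, u) < L s(Q, u)) :
    ((∀ u v, u ≠ P → u ≠ Q → v ≠ P → v ≠ Q → L s(P, u) < L s(Q, v)) ∧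
      (∀ u, u ≠ P → u ≠ Q → L s(P, u) < L s(P, Q))) ∨
    ((∀ u, u ≠ P → u ≠ Q → L s(P, Q) < L s(P, u)) ∧
      (∀ u v, u ≠ P → u ≠ Q → v ≠ P → v ≠ Q → u ≠ v →
        L s(Q, u) < L s(P, v) ∨ L s(Q, v) < L s(P, u))) := by
  have h0 := ginj.ne hPQ
  have hPQ' := hP Q hPQ.symm
  have B : ∀ u, u ≠ P → u ≠ Q → g u ≠ g P ∧ g u ≠ g Q ∧
      ((g P < g Q ∧ g u < g Q) ∨ (g Q < g P ∧ g P < g u)) := by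
    intro u h1 h2
    have := hA u h1 h2
    rw [hg _ _ _ _ (hP u h1) (hQ u h2)] at this
    have := ginj.ne h1
    have := ginj.ne h2
    have := gN u
    have := gN P
    have := gN Q
    omega
  have gP := gN P
  have gQ := gN Q
  rcases Nat.lt_or_gt_of_ne h0 with h | h
  · left
    refine ⟨?_, ?_⟩
    · intro u v u1 u2 v1 v2
      rw [hg _ _ _ _ (hP u u1) (hQ v v2)]
      have := B u u1 u2
      have := B v v1 v2
      omega
    · intro u u1 u2
      rw [hg _ _ _ _ (hP u u1) hPQ']
      have := B u u1 u2
      omega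
  · right
    refine ⟨?_, ?_⟩
    · intro u u1 u2
      rw [hg _ _ _ _ hPQ' (hP u u1)]
      have := B u u1 u2
      omega
    · intro u v u1 u2 v1 v2 huv
      rw [hg _ _ _ _ (hQ u u2) (hP v v1), hg _ _ _ _ (hQ v v2) (hP u u1)]
      have := B u u1 u2
      have := B v v1 v2
      have := ginj.ne huv
      omega

theorem iso_of_cannot {n : ℕ} (hn : 4 ≤ n) (L : Sym2 (Fin n) → ℕ)
    (hV : (EOGraph.mk n (Dunder n) L).Valid) {N : ℕ} (G : SimpleGraph (Fin N))
    (hG : ¬ CanAvoid G {EOGraph.mk n (Dunder n) L}) :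
    EOGraph.Iso (EOGraph.mk n (Dunder n) L) (Dgraph n) := by
  obtain ⟨g1, i1, _, c1⟩ := canonical G _ L hG (fun i _ => i) (fun _ j => j)
    (by intros; omega) (by intros; omega)
  obtain ⟨g2, i2, n2, c2⟩ := canonical G _ L hG (fun i _ => i) (fun _ j => N - j)
    (by intros; omega) (by intros; omega)
  obtain ⟨g3, i3, n3, c3⟩ := canonical G _ L hG (fun _ j => j) (fun i _ => N - i)
    (by intros; omega) (by intros; omega)
  have main : ∀ P Q : Fin n, P ≠ Q →
      (∀ a b, (Dunder n).Adj a b ↔ a ≠ b ∧ (a = P ∨ b = P ∨ a = Q ∨ b = Q)) →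
      (∀ u, u ≠ P → u ≠ Q → L s(P, u) < L s(Q, u)) →
      (∃ u v, u ≠ P ∧ u ≠ Q ∧ v ≠ P ∧ v ≠ Q ∧ u ≠ v) →
      EOGraph.Iso (EOGraph.mk n (Dunder n) L) (Dgraph n) := by
    rintro P Q hPQ hadj hA ⟨u, v, u1, u2, v1, v2, huv⟩
    have hP : ∀ u, u ≠ P → (Dunder n).Adj P u := fun u hu => (hadj _ _).2 ⟨hu.symm, Or.inl rfl⟩
    have hQ : ∀ u, u ≠ Q → (Dunder n).Adj Q u := fun u hu =>
      (hadj _ _).2 ⟨hu.symm, Or.inr (Or.inr (Or.inl rfl))⟩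
    rcases invmin_fact _ L P Q hPQ hP hQ g2 i2 n2 c2 hA with ⟨a1, a2, a3⟩ | ⟨a1, a2⟩ <;>
    rcases invmax_fact _ L P Q hPQ hP hQ g3 i3 n3 c3 hA with ⟨b1, b2⟩ | ⟨b1, b2⟩
    · refine iso_of_order (by omega) L P Q hPQ hadj ?_ ?_ ?_
      · intro u v hu hv h
        have := hV s(P, u) (hP u hu) s(P, v) (hP v hv) h
        exact Sym2.congr_right.1 this
      · exact fun u hu hu' => ⟨b2 u hu hu', a2 u hu hu'⟩
      · exact fun u v e1 e2 e3 e4 => a3 u v e1 e2 e3 e4 (b2 u e1 e2) (b2 v e3 e4)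
    · exfalso
      have := b2 u v u1 u2 v1 v2 huv
      have := a1 u v u1 u2 v1 v2
      have := a1 v u v1 v2 u1 u2
      omega
    · exfalso
      have := a2 u v u1 u2 v1 v2 huv
      have := b1 u v u1 u2 v1 v2
      have := b1 v u v1 v2 u1 u2
      omega
    · exfalso
      have := a1 u u1 u2
      have := b1 u u1 u2
      have := hA u u1 u2
      omega
  have hadj : ∀ a b, (Dunder n).Adj a b ↔ a ≠ b ∧ (a = (⟨0, by omega⟩ : Fin n) ∨
      b = (⟨0, by omega⟩ : Fin n) ∨ a = (⟨n - 1, by omega⟩ : Fin n) ∨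
      b = (⟨n - 1, by omega⟩ : Fin n)) := by
    intro a b
    rw [Dunder_adj]
    simp only [Fin.ext_iff]
  have hne : (⟨0, by omega⟩ : Fin n) ≠ ⟨n - 1, by omega⟩ := by
    simp only [ne_eq, Fin.ext_iff]; omega
  have hex : ∃ u v : Fin n, u ≠ ⟨0, by omega⟩ ∧ u ≠ ⟨n - 1, by omega⟩ ∧ v ≠ ⟨0, by omega⟩ ∧
      v ≠ ⟨n - 1, by omega⟩ ∧ u ≠ v := by
    refine ⟨⟨1, by omega⟩, ⟨2, by omega⟩, ?_⟩
    simp only [ne_eq, Fin.ext_iff]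
    omega
  have hP : ∀ u : Fin n, u ≠ ⟨0, by omega⟩ → (Dunder n).Adj ⟨0, by omega⟩ u := fun u hu =>
    (hadj _ u).2 ⟨Ne.symm hu, Or.inl rfl⟩
  have hQ : ∀ u : Fin n, u ≠ ⟨n - 1, by omega⟩ → (Dunder n).Adj ⟨n - 1, by omega⟩ u := fun u hu =>
    (hadj _ u).2 ⟨Ne.symm hu, Or.inr (Or.inr (Or.inl rfl))⟩
  rcases min_fact _ L _ _ hne hP hQ g1 i1 c1 with h | h
  · exact main _ _ hne hadj h hex
  · refine main _ _ hne.symm (fun a b => ?_) (fun u h1 h2 => h u h2 h1) ?_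
    · rw [hadj]; tauto
    · obtain ⟨u, v, e1, e2, e3, e4, e5⟩ := hex
      exact ⟨u, v, e2, e1, e4, e3, e5⟩

theorem iso_two (L : Sym2 (Fin 2) → ℕ) :
    EOGraph.Iso (EOGraph.mk 2 (Dunder 2) L) (Dgraph 2) := by
  refine iso_of_order le_rfl L 0 1 (by decide) ?_ ?_ ?_ ?_
  · intro a b
    rw [Dunder_adj]
    simp only [Fin.ext_iff]
    rfl
  · intro u v; omega
  · intro u; omega
  · intro u v; omega

theorem iso_three (L : Sym2 (Fin 3) → ℕ) (hV : (EOGraph.mk 3 (Dunder 3) L).Valid) :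
    EOGraph.Iso (EOGraph.mk 3 (Dunder 3) L) (Dgraph 3) := by
  have adj : ∀ a b : Fin 3, (Dunder 3).Adj a b ↔ a ≠ b := by
    intro a b
    rw [Dunder_adj]
    simp only [ne_eq, Fin.ext_iff]
    omega
  have main : ∀ P Q u : Fin 3, P ≠ Q → u ≠ P → u ≠ Q → L s(P, u) < L s(P, Q) →
      L s(P, Q) < L s(Q, u) → EOGraph.Iso (EOGraph.mk 3 (Dunder 3) L) (Dgraph 3) := by
    intro P Q u h1 h2 h3 h4 h5
    have hu : ∀ v, v ≠ P → v ≠ Q → v = u := by omega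
    refine iso_of_order (by norm_num) L P Q h1 ?_ ?_ ?_ ?_
    · intro a b
      rw [adj]
      omega
    · intro a b ha hb h
      exact Sym2.congr_right.1
        (hV s(P, a) ((adj _ _).2 ha.symm) s(P, b) ((adj _ _).2 hb.symm) h)
    · intro v h6 h7
      rw [hu v h6 h7]
      exact ⟨h4, h5⟩
    · intro v v' e1 e2 e3 e4 h
      rw [hu v e1 e2, hu v' e3 e4] at h
      omega
  have n1 : L s(0, 1) ≠ L s(0, 2) := fun h => by
    have : (_ : Sym2 (Fin 3)) = _ := hV s((0 : Fin 3), 1) ((adj 0 1).2 (by decide)) s((0 : Fin 3), 2) ((adj 0 2).2 (by decide)) h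
    exact absurd this (show ¬ s((0 : Fin 3), 1) = s(0, 2) by decide)
  have n2 : L s(0, 1) ≠ L s(1, 2) := fun h => by
    have : (_ : Sym2 (Fin 3)) = _ := hV s((0 : Fin 3), 1) ((adj 0 1).2 (by decide)) s((1 : Fin 3), 2) ((adj 1 2).2 (by decide)) h
    exact absurd this (show ¬ s((0 : Fin 3), 1) = s(1, 2) by decide)
  have n3 : L s(0, 2) ≠ L s(1, 2) := fun h => by
    have : (_ : Sym2 (Fin 3)) = _ := hV s((0 : Fin 3), 2) ((adj 0 2).2 (by decide)) s((1 : Fin 3), 2) ((adj 1 2).2 (by decide)) h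
    exact absurd this (show ¬ s((0 : Fin 3), 2) = s(1, 2) by decide)
  have s1 : L s(1, 0) = L s(0, 1) := by rw [Sym2.eq_swap]
  have s2 : L s(2, 0) = L s(0, 2) := by rw [Sym2.eq_swap]
  have s3 : L s(2, 1) = L s(1, 2) := by rw [Sym2.eq_swap]
  have m1 := main 0 1 2 (by decide) (by decide) (by decide)
  have m2 := main 1 0 2 (by decide) (by decide) (by decide)
  have m3 := main 0 2 1 (by decide) (by decide) (by decide)
  have m4 := main 2 0 1 (by decide) (by decide) (by decide)
  have m5 := main 1 2 0 (by decide) (by decide) (by decide)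
  have m6 := main 2 1 0 (by decide) (by decide) (by decide)
  rcases Nat.lt_or_gt_of_ne n1 with k1 | k1 <;> rcases Nat.lt_or_gt_of_ne n2 with k2 | k2 <;>
    rcases Nat.lt_or_gt_of_ne n3 with k3 | k3 <;>
    first
    | omega
    | exact m1 (by omega) (by omega)
    | exact m2 (by omega) (by omega)
    | exact m3 (by omega) (by omega)
    | exact m4 (by omega) (by omega)
    | exact m5 (by omega) (by omega)
    | exact m6 (by omega) (by omega)

/-- For `n ≥ 2` the order chromatic number of `D_n` is finite, but for
every edge-ordering of the underlying simple graph of `D_n` that is not isomorphic (as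
an edge-ordered graph) to `D_n`, the order chromatic number is infinite. -/
theorem orderChrom_Dgraph_finite_and_unique (n : ℕ) (hn : 2 ≤ n) :
    orderChrom {Dgraph n} < ⊤ ∧
      ∀ L : Sym2 (Fin n) → ℕ, (EOGraph.mk n (Dunder n) L).Valid →
        ¬ EOGraph.Iso (EOGraph.mk n (Dunder n) L) (Dgraph n) →
        orderChrom {EOGraph.mk n (Dunder n) L} = ⊤ := by
  constructor
  · obtain ⟨N, hN⟩ := exists_cannot_avoid n hn
    have : orderChrom {Dgraph n} ≤ (⊤ : SimpleGraph (Fin N)).chromaticNumber :=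
      iInf_le_of_le N (iInf_le_of_le ⊤ (iInf_le _ hN))
    refine this.trans_lt ?_
    rw [SimpleGraph.chromaticNumber_top]
    exact ENat.natCast_lt_top _
  · intro L hV hiso
    unfold orderChrom
    simp only [iInf_eq_top]
    intro N G hG
    exfalso
    apply hiso
    rcases (by omega : n = 2 ∨ n = 3 ∨ 4 ≤ n) with rfl | rfl | h
    · exact iso_two L
    · exact iso_three L hV
    · exact iso_of_cannot h L hV G hG
end
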